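/- arXiv:1611.07199 — 2 statements merged into one kernel-verified Lean document; each statement's English description precedes it below -/
import Mathlib

section
/- Let (Ω,Σ,μ) be a probability space and X a Banach space. Then X has property (δS_μ) if and only if every uniformly bounded relatively weakly compact subset of L¹(μ,X) is a δS-set. -/
open MeasureTheory Filter Set ENNReal Pointwise

noncomputable section

def IsWeaklyCompact {X : Type*} [NormedAddCommGroup X] [NormedSpace ℝ X] (W : Set X) : Prop :=
  IsCompact (toWeakSpace ℝ X '' W)

def IsRelWeaklyCompact {X : Type*} [NormedAddCommGroup X] [NormedSpace ℝ X] (W : Set X) : Prop :=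
  IsCompact (closure (toWeakSpace ℝ X '' W))

variable {Ω : Type*} [MeasurableSpace Ω] {X : Type*} [NormedAddCommGroup X] [NormedSpace ℝ X]

/-- A set of functions in `L¹(μ,X)` is uniformly integrable if it is bounded and the integrals
of the norms over small sets are uniformly small. -/
def UnifIntegrableSet (μ : Measure Ω) (K : Set (Lp X 1 μ)) : Prop :=
  (∃ C : ℝ, ∀ f ∈ K, ‖f‖ ≤ C) ∧
  ∀ ε : ℝ, 0 < ε → ∃ δ : ℝ, 0 < δ ∧ ∀ f ∈ K, ∀ A : Set Ω, μ A ≤ ENNReal.ofReal δ →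
    ∫ ω in A, ‖(f : Ω → X) ω‖ ∂μ ≤ ε

/-- `K ⊆ L¹(μ,X)` is a δS-set if it is uniformly integrable and for every `δ > 0` there is a
weakly compact `W ⊆ X` with `μ (f ⁻¹' W) ≥ 1 - δ` for all `f ∈ K`. -/
def IsDeltaSSet (μ : Measure Ω) (K : Set (Lp X 1 μ)) : Prop :=
  UnifIntegrableSet μ K ∧
  ∀ δ : ℝ, 0 < δ → ∃ W : Set X, IsWeaklyCompact W ∧
    ∀ f ∈ K, 1 - ENNReal.ofReal δ ≤ μ ((f : Ω → X) ⁻¹' W)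

/-- A Banach space `X` has property (δSμ) if every relatively weakly compact subset of
`L¹(μ,X)` is a δS-set. -/
def DeltaSProp (μ : Measure Ω) (X : Type*) [NormedAddCommGroup X] [NormedSpace ℝ X] : Prop :=
  ∀ K : Set (Lp X 1 μ), IsRelWeaklyCompact K → IsDeltaSSet μ K

/-!
A relatively weakly compact `K ⊆ L¹(μ, X)` is uniformly integrable by Dunford's theorem, so only
weak tightness matters: finding a weakly compact `W` that the functions in `K` leave on a small set
only. By Markov's inequality it is enough to find `W` for the truncations of the functions in `K`.
These truncations are uniformly bounded, but truncation is not weakly continuous, so they need not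
form a relatively weakly compact set and the hypothesis does not apply to them directly.

Random signs repair this for a weakly null sequence `fₙ`. On the diffuse part of the space there is
room for a copy `hₙ` of the truncations multiplied by independent signs. The norm of a linear
combination of the `hₙ` is a sign average, which only grows when truncation is undone, so it is at
most the sign average of the norms of the same combination of the `fₙ`; hence `hₙ` is again weakly
null. It is uniformly bounded, the hypothesis yields `W`, and `W ∪ -W ∪ {0}` serves for the
truncations of `fₙ`. On an atom the `fₙ` are constant, and the constants form a relatively weakly
compact set.

Hence every weakly convergent sequence is weakly tight. Weakly tight bounded families are relatively
weakly compact in `L¹`, so the Eberlein–Šmulian theorem makes the truncations of all of `K`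
relatively weakly compact, and the hypothesis applies to them.
-/

open Topology

section WeakConvergence

variable {ι E F : Type*} [NormedAddCommGroup E] [NormedSpace ℝ E]
  [NormedAddCommGroup F] [NormedSpace ℝ F]

/-- Weak convergence, tested on functionals rather than in `WeakSpace ℝ E` so that the elements
`u i` keep their norm topology. -/
def WeakTendsto (u : ι → E) (l : Filter ι) (x : E) : Prop :=
  ∀ φ : StrongDual ℝ E, Tendsto (fun i => φ (u i)) l (𝓝 (φ x))

theorem weakTendsto_iff_tendsto_toWeakSpace {u : ι → E} {l : Filter ι} {x : E} :
    WeakTendsto u l x ↔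
      Tendsto (fun i => toWeakSpace ℝ E (u i)) l (𝓝 (toWeakSpace ℝ E x)) := by
  have separating : Function.Injective (topDualPairing ℝ E).flip := fun a b hab =>
    (SeparatingDual.eq_iff_forall_dual_eq (R := ℝ)).2 fun φ => LinearMap.congr_fun hab φ
  exact (WeakBilin.tendsto_iff_forall_eval_tendsto _ separating).symm

theorem continuous_dual_weakSpace (φ : StrongDual ℝ E) :
    Continuous fun w : WeakSpace ℝ E => φ ((toWeakSpace ℝ E).symm w) :=
  WeakBilin.eval_continuous (topDualPairing ℝ E).flip φ

namespace WeakTendsto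

variable {u v : ι → E} {l : Filter ι} {x y : E}

theorem map (h : WeakTendsto u l x) (T : E →L[ℝ] F) : WeakTendsto (fun i => T (u i)) l (T x) :=
  fun φ => h (φ.comp T)

theorem prodMk {v : ι → F} {y : F} (hu : WeakTendsto u l x) (hv : WeakTendsto v l y) :
    WeakTendsto (fun i => (u i, v i)) l (x, y) := fun φ => by
  have split (a : E) (b : F) : φ (a, b) = φ.comp (.inl ℝ E F) a + φ.comp (.inr ℝ E F) b := by
    simp [← map_add]
  simp only [split]
  exact (hu _).add (hv _)

theorem comp {κ : Type*} {l' : Filter κ} {g : κ → ι} (h : WeakTendsto u l x)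
    (hg : Tendsto g l' l) : WeakTendsto (fun k => u (g k)) l' x :=
  fun φ => (h φ).comp hg

theorem sub (hu : WeakTendsto u l x) (hv : WeakTendsto v l y) :
    WeakTendsto (fun i => u i - v i) l (x - y) := fun φ => by
  simpa only [map_sub] using (hu φ).sub (hv φ)

theorem sub_const_iff : WeakTendsto (fun i => u i - x) l 0 ↔ WeakTendsto u l x := by
  simp only [WeakTendsto, map_sub, map_zero, tendsto_sub_nhds_zero_iff]

theorem mem_of_convex [l.NeBot] {s : Set E} (h : WeakTendsto u l x) (hs : Convex ℝ s)
    (hs' : IsClosed s) (hu : ∀ᶠ i in l, u i ∈ s) : x ∈ s := by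
  have weakly_closed : IsClosed (toWeakSpace ℝ E '' s) := by
    rw [← hs'.closure_eq, hs.toWeakSpace_closure ℝ]
    exact isClosed_closure
  have := weakly_closed.mem_of_tendsto (weakTendsto_iff_tendsto_toWeakSpace.1 h)
    (hu.mono fun i hi => mem_image_of_mem _ hi)
  rwa [(toWeakSpace ℝ E).injective.mem_set_image] at this

theorem norm_le [l.NeBot] (h : WeakTendsto u l x) {C : ℝ} (hu : ∀ᶠ i in l, ‖u i‖ ≤ C) :
    ‖x‖ ≤ C :=
  mem_closedBall_zero_iff.1 <| h.mem_of_convex (convex_closedBall 0 C) Metric.isClosed_closedBall <|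
    hu.mono fun _ => mem_closedBall_zero_iff.2

theorem unique [l.NeBot] (hx : WeakTendsto u l x) (hy : WeakTendsto u l y) : x = y :=
  (SeparatingDual.eq_iff_forall_dual_eq (R := ℝ)).2 fun φ => tendsto_nhds_unique (hx φ) (hy φ)

end WeakTendsto

theorem exists_dual_eq_of_abs_linearCombination_le (u : ι → E) (c : ι → ℝ) (M : ℝ) (hM : 0 ≤ M)
    (h : ∀ a : ι →₀ ℝ,
      |Finsupp.linearCombination ℝ c a| ≤ M * ‖Finsupp.linearCombination ℝ u a‖) :
    ∃ φ : StrongDual ℝ E, ‖φ‖ ≤ M ∧ ∀ i, φ (u i) = c i := by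
  set T := Finsupp.linearCombination ℝ u
  set S := Finsupp.linearCombination ℝ c
  obtain ⟨s, hs⟩ := T.rangeRestrict.exists_rightInverse_of_surjective T.range_rangeRestrict
  have T_s (y : LinearMap.range T) : T (s y) = y := congrArg Subtype.val (LinearMap.congr_fun hs y)
  have bound (y : LinearMap.range T) : ‖(S ∘ₗ s) y‖ ≤ M * ‖y‖ := (h (s y)).trans_eq (by simp [T_s])
  obtain ⟨φ, φ_eq, φ_norm⟩ :=
    exists_extension_norm_eq (𝕜 := ℝ) _ ((S ∘ₗ s).mkContinuous M bound)
  refine ⟨φ, φ_norm.trans_le (LinearMap.mkContinuous_norm_le _ hM _), fun i => ?_⟩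
  have S_eq (a : ι →₀ ℝ) : S (s ⟨T a, a, rfl⟩) = S a := by
    have := h (s ⟨T a, a, rfl⟩ - a)
    rwa [map_sub, map_sub, T_s, sub_self, norm_zero, mul_zero, abs_nonpos_iff, sub_eq_zero] at this
  simpa [T, S] using (φ_eq ⟨T (Finsupp.single i 1), _, rfl⟩).trans (S_eq (Finsupp.single i 1))

theorem WeakTendsto.of_norm_linearCombination_le {u : ι → E} {v : ι → F} {l : Filter ι}
    (hu : WeakTendsto u l 0)
    (h : ∀ a : ι →₀ ℝ,
      ‖Finsupp.linearCombination ℝ v a‖ ≤ ‖Finsupp.linearCombination ℝ u a‖) :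
    WeakTendsto v l 0 := by
  intro φ
  obtain ⟨ψ, -, hψ⟩ := exists_dual_eq_of_abs_linearCombination_le u (φ ∘ v) ‖φ‖ (norm_nonneg _)
    fun a => by
      rw [← Real.norm_eq_abs]
      calc ‖Finsupp.linearCombination ℝ (φ ∘ v) a‖
          = ‖φ (Finsupp.linearCombination ℝ v a)‖ :=
            congrArg _ (Finsupp.apply_linearCombination ℝ (φ : F →ₗ[ℝ] ℝ) v a).symm
        _ ≤ ‖φ‖ * ‖Finsupp.linearCombination ℝ v a‖ := φ.le_opNorm _
        _ ≤ _ := by gcongr; exact h a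
  simpa [hψ] using hu ψ

theorem isRelWeaklyCompact_range {u : ℕ → E} {x : E} (h : WeakTendsto u atTop x) :
    IsRelWeaklyCompact (range u) := by
  refine (weakTendsto_iff_tendsto_toWeakSpace.1 h).isCompact_insert_range.closure_of_subset ?_
  rw [← range_comp]
  exact subset_insert _ _

theorem IsRelWeaklyCompact.exists_norm_le {K : Set E} (hK : IsRelWeaklyCompact K) :
    ∃ C : ℝ, ∀ x ∈ K, ‖x‖ ≤ C := by
  obtain ⟨C, hC⟩ := banach_steinhaus (𝕜 := ℝ) (𝕜₂ := ℝ) (σ₁₂ := RingHom.id ℝ)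
    (g := fun x : K => NormedSpace.inclusionInDoubleDual ℝ E x) fun φ => by
      obtain ⟨C, hC⟩ := (hK.image (continuous_dual_weakSpace φ)).isBounded.exists_norm_le
      exact ⟨C, fun x => hC _ ⟨toWeakSpace ℝ E x, subset_closure ⟨x, x.2, rfl⟩, by simp⟩⟩
  refine ⟨C, fun x hx => ?_⟩
  rw [← (NormedSpace.inclusionInDoubleDualLi ℝ (E := E)).norm_map x]
  exact hC ⟨x, hx⟩

theorem IsRelWeaklyCompact.exists_weakTendsto {K : Set E} (hK : IsRelWeaklyCompact K) {u : ι → E}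
    (hu : ∀ i, u i ∈ K) (U : Ultrafilter ι) : ∃ x, WeakTendsto u U x := by
  obtain ⟨w, -, hw⟩ := hK.ultrafilter_le_nhds (U.map fun i => toWeakSpace ℝ E (u i)) <| by
    rw [le_principal_iff]
    exact mem_map.2 (Eventually.of_forall fun i => subset_closure ⟨_, hu i, rfl⟩)
  refine ⟨(toWeakSpace ℝ E).symm w, weakTendsto_iff_tendsto_toWeakSpace.2 ?_⟩
  rwa [LinearEquiv.apply_symm_apply]

theorem exists_norming_seq {M : Set (StrongDual ℝ E)} (hM : TopologicalSpace.IsSeparable M) :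
    ∃ y : ℕ → E, (∀ k, ‖y k‖ ≤ 1) ∧
      ∀ G ∈ M, ∀ r, (∀ k, |G (y k)| ≤ r) → ‖G‖ ≤ 2 * r := by
  obtain ⟨c, c_countable, M_le⟩ := hM
  rcases c.eq_empty_or_nonempty with rfl | c_nonempty
  · exact ⟨0, by simp, fun G hG => by simpa using M_le hG⟩
  obtain ⟨d, rfl⟩ := c_countable.exists_eq_range c_nonempty
  have norming (k : ℕ) : ∃ y : E, ‖y‖ ≤ 1 ∧ ‖d k‖ ≤ 2 * |d k y| := by
    rcases eq_or_ne (d k) 0 with hd | hd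
    · exact ⟨0, by simp [hd]⟩
    · obtain ⟨y, y_lt, hy⟩ := (d k).exists_lt_apply_of_lt_opNorm (half_lt_self (norm_pos_iff.2 hd))
      rw [Real.norm_eq_abs] at hy
      exact ⟨y, y_lt.le, by linarith⟩
  choose y y_norm hy using norming
  refine ⟨y, y_norm, fun G hG r hr => le_of_forall_pos_le_add fun ε hε => ?_⟩
  obtain ⟨k, hk⟩ := Metric.mem_closure_range_iff.1 (M_le hG) (ε / 3) (by positivity)
  rw [dist_eq_norm] at hk
  have G_sub : |(G - d k) (y k)| ≤ ‖G - d k‖ := (G - d k).unit_le_opNorm _ (y_norm k)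
  have := abs_sub_abs_le_abs_sub (d k (y k)) (G (y k))
  rw [abs_sub_comm] at this
  have := norm_le_norm_add_norm_sub' G (d k)
  simp only [sub_apply] at G_sub
  linarith [hy k, hr k]

theorem exists_separating_seq {M : Set E} (hM : TopologicalSpace.IsSeparable M) :
    ∃ d : ℕ → StrongDual ℝ E, (∀ k, ‖d k‖ ≤ 1) ∧ ∀ z ∈ M, (∀ k, d k z = 0) → z = 0 := by
  obtain ⟨d, d_norm, hd⟩ :=
    exists_norming_seq (hM.image (NormedSpace.inclusionInDoubleDual ℝ E).continuous)
  refine ⟨d, d_norm, fun z hz h0 => ?_⟩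
  have : ‖NormedSpace.inclusionInDoubleDual ℝ E z‖ ≤ 2 * 0 :=
    hd _ (mem_image_of_mem _ hz) 0 (by simp [NormedSpace.dual_def, h0])
  rwa [mul_zero, show ‖NormedSpace.inclusionInDoubleDual ℝ E z‖ = ‖z‖ from
    (NormedSpace.inclusionInDoubleDualLi ℝ).norm_map z, norm_le_zero_iff] at this

end WeakConvergence

section EberleinSmulian

variable {E : Type*} [NormedAddCommGroup E] [NormedSpace ℝ E]

theorem isSeparable_closedSpan_range (f : ℕ → E) :
    TopologicalSpace.IsSeparable ((Submodule.span ℝ (range f)).topologicalClosure : Set E) := by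
  rw [Submodule.topologicalClosure_coe]
  exact (countable_range f).isSeparable.span.closure

theorem WeakTendsto.mem_closedSpan {f : ℕ → E} {l : Filter ℕ} [l.NeBot] {x : E}
    (h : WeakTendsto f l x) : x ∈ (Submodule.span ℝ (range f)).topologicalClosure :=
  h.mem_of_convex (Submodule.convex _) (Submodule.isClosed_topologicalClosure _)
    (Eventually.of_forall fun n => Submodule.le_topologicalClosure _
      (Submodule.subset_span (mem_range_self n)))

theorem IsRelWeaklyCompact.exists_subseq {K : Set E} (hK : IsRelWeaklyCompact K) {f : ℕ → E}
    (hf : ∀ n, f n ∈ K) :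
    ∃ (x : E) (ψ : ℕ → ℕ), StrictMono ψ ∧ WeakTendsto (fun n => f (ψ n)) atTop x := by
  obtain ⟨C, hC⟩ := hK.exists_norm_le
  set M := (Submodule.span ℝ (range f)).topologicalClosure
  obtain ⟨d, d_norm, d_sep⟩ := exists_separating_seq (isSeparable_closedSpan_range f)
  obtain ⟨c, -, ψ, hψ, hlim⟩ := (isCompact_univ_pi fun _ : ℕ => isCompact_Icc
    (a := -C) (b := C)).tendsto_subseq (x := fun n k => d k (f n)) fun n k _ =>
      abs_le.1 (((d k).le_of_opNorm_le (d_norm k) _).trans (by simpa using hC _ (hf n)))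
  rw [tendsto_pi_nhds] at hlim
  have limit (U : Ultrafilter ℕ) (hU : (U : Filter ℕ) ≤ atTop) :
      ∃ z ∈ M, (∀ k, d k z = c k) ∧ WeakTendsto (fun n => f (ψ n)) U z := by
    obtain ⟨z, hz⟩ := hK.exists_weakTendsto (fun n => hf (ψ n)) U
    refine ⟨z, ?_, fun k => tendsto_nhds_unique (hz (d k)) ((hlim k).mono_left hU), hz⟩
    have : WeakTendsto f (U.map ψ) z := hz
    exact this.mem_closedSpan
  obtain ⟨x, xM, hx, -⟩ := limit _ (Ultrafilter.of_le (atTop : Filter ℕ))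
  refine ⟨x, ψ, hψ, fun φ => tendsto_iff_ultrafilter _ _ _ |>.2 fun U hU => ?_⟩
  obtain ⟨z, zM, hz, h⟩ := limit U hU
  have : z - x = 0 := d_sep _ (M.sub_mem zM xM) fun k => by rw [map_sub, hz, hx, sub_self]
  rw [← sub_eq_zero.1 this]
  exact h φ

local notation "J" => NormedSpace.inclusionInDoubleDual ℝ E

theorem eq_inclusionInDoubleDual_of_norming {F : StrongDual ℝ (StrongDual ℝ E)} {x : E}
    {D : Set (StrongDual ℝ E)} {V : Set E} (hx : x ∈ closure V) (D_norm : ∀ φ ∈ D, ‖φ‖ ≤ 1)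
    (F_eq : ∀ φ ∈ D, F φ = φ x)
    (norming : ∀ y ∈ V, ∀ r, (∀ φ ∈ D, |F φ - φ y| ≤ r) → ‖F - J y‖ ≤ 2 * r) : F = J x := by
  refine sub_eq_zero.1 (norm_le_zero_iff.1 (le_of_forall_pos_le_add fun ε hε => ?_))
  obtain ⟨y, hy, hxy⟩ := Metric.mem_closure_iff.1 hx (ε / 3) (by positivity)
  rw [dist_eq_norm] at hxy
  have F_sub : ‖F - J y‖ ≤ 2 * ‖x - y‖ := norming y hy _ fun φ hφ => by
    rw [F_eq φ hφ, ← map_sub]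
    simpa using φ.le_of_opNorm_le (D_norm φ hφ) (x - y)
  have J_sub : ‖J y - J x‖ ≤ ‖x - y‖ := by
    rw [← map_sub, norm_sub_rev]
    exact NormedSpace.double_dual_bound ℝ E _
  linarith [norm_sub_le_norm_sub_add_norm_sub F (J y) (J x)]

theorem exists_mem_forall_abs_sub_lt {A : Set E} {F : WeakDual ℝ (StrongDual ℝ E)}
    (hF : F ∈ closure (NormedSpace.inclusionInDoubleDualWeak ℝ E '' (toWeakSpace ℝ E '' A)))
    (S : Finset (StrongDual ℝ E)) {ε : ℝ} (hε : 0 < ε) : ∃ a ∈ A, ∀ φ ∈ S, |F φ - φ a| < ε := by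
  have near : ∀ᶠ G : WeakDual ℝ (StrongDual ℝ E) in 𝓝 F, ∀ φ ∈ S, |F φ - G φ| < ε := by
    refine (Finset.eventually_all S).2 fun φ _ => ?_
    have : Continuous fun G : WeakDual ℝ (StrongDual ℝ E) => |F φ - G φ| :=
      (continuous_const.sub (WeakDual.eval_continuous φ)).abs
    exact this.continuousAt.eventually_lt_const (by simpa using hε)
  obtain ⟨_, ⟨_, ⟨a, ha, rfl⟩, rfl⟩, hG⟩ :=
    ((mem_closure_iff_frequently.1 hF).and_eventually near).exists
  exact ⟨a, ha, hG⟩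

theorem isSeparable_sub_image_span {D : Type*} [NormedAddCommGroup D] [NormedSpace ℝ D]
    (F : D) (T : E →L[ℝ] D) {s : Set E} (hs : s.Countable) :
    TopologicalSpace.IsSeparable ((fun y => F - T y) '' Submodule.span ℝ s) :=
  hs.isSeparable.span.image (continuous_const.sub T.continuous)

theorem mem_span_iUnion_finset {T : ℕ → Finset E} (hT : Monotone T) {y : E}
    (hy : y ∈ Submodule.span ℝ (⋃ m, (T m : Set E))) : ∃ m, y ∈ Submodule.span ℝ (T m : Set E) := by
  rw [Submodule.span_iUnion] at hy
  refine (Submodule.mem_iSup_of_directed _ (Monotone.directed_le fun i j hij => ?_)).1 hy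
  exact Submodule.span_mono (Finset.coe_subset.2 (hT hij))

-- Whitley's construction: the sequence approximates `F` on functionals norming `F - J y` for `y` in
-- its own span, so a weak limit of the sequence cannot differ from `F`.
theorem exists_seq_eq_inclusionInDoubleDual {A : Set E} (F : StrongDual ℝ (StrongDual ℝ E))
    (approx : ∀ (S : Finset (StrongDual ℝ E)) (ε : ℝ), 0 < ε →
      ∃ a ∈ A, ∀ φ ∈ S, |F φ - φ a| < ε) :
    ∃ a : ℕ → E, (∀ n, a n ∈ A) ∧ ∀ (x : E) (l : Filter ℕ), l.NeBot → l ≤ atTop →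
      WeakTendsto a l x → F = J x := by
  classical
  choose Y Y_norm hY using fun T : Finset E =>
    exists_norming_seq (isSeparable_sub_image_span F J T.countable_toSet)
  choose pick pick_mem hpick using fun (n : ℕ) (T : Finset E) => approx
    (T.powerset.biUnion fun T' => (Finset.range (n + 1)).image (Y T')) (1 / ((n : ℝ) + 1))
    Nat.one_div_pos_of_nat
  obtain ⟨T, T_succ⟩ : ∃ T : ℕ → Finset E, ∀ n, T (n + 1) = insert (pick n (T n)) (T n) :=
    ⟨fun n => Nat.rec ∅ (fun n t => insert (pick n t) t) n, fun n => rfl⟩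
  have T_mono : Monotone T := monotone_nat_of_le_succ fun n =>
    T_succ n ▸ Finset.subset_insert _ _
  refine ⟨fun n => pick n (T n), fun n => pick_mem _ _, fun x l _ hl hx => ?_⟩
  have F_eq (m k : ℕ) : F (Y (T m) k) = Y (T m) k x := by
    refine tendsto_nhds_unique (tendsto_iff_dist_tendsto_zero.2 ?_) (hx (Y (T m) k))
    refine squeeze_zero' (Eventually.of_forall fun _ => dist_nonneg) ?_
      (tendsto_one_div_add_atTop_nhds_zero_nat.mono_left hl)
    filter_upwards [hl (eventually_ge_atTop (max m k))] with n hn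
    rw [dist_comm, Real.dist_eq]
    refine (hpick n (T n) _ (Finset.mem_biUnion.2 ⟨T m, Finset.mem_powerset.2
      (T_mono ((le_max_left m k).trans hn)), Finset.mem_image_of_mem _ ?_⟩)).le
    exact Finset.mem_range.2 (Nat.lt_succ_of_le ((le_max_right m k).trans hn))
  refine eq_inclusionInDoubleDual_of_norming (D := ⋃ m, range (Y (T m)))
    (V := Submodule.span ℝ (⋃ m, (T m : Set E))) ?_ ?_ ?_ ?_
  · have closed_span := hx.mem_closedSpan
    rw [← SetLike.mem_coe, Submodule.topologicalClosure_coe] at closed_span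
    refine closure_mono (Submodule.span_mono ?_) closed_span
    exact range_subset_iff.2 fun n => mem_iUnion.2
      ⟨n + 1, T_succ n ▸ Finset.mem_insert_self _ _⟩
  · simpa only [mem_iUnion, mem_range, forall_exists_index, forall_apply_eq_imp_iff] using
      fun φ m k h => h ▸ Y_norm (T m) k
  · simpa only [mem_iUnion, mem_range, forall_exists_index] using
      fun φ m k h => h ▸ F_eq m k
  · intro y hy r hr
    obtain ⟨m, hm⟩ := mem_span_iUnion_finset T_mono hy
    exact hY (T m) _ (mem_image_of_mem _ hm) r fun k => hr _ (mem_iUnion.2 ⟨m, k, rfl⟩)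

theorem isRelWeaklyCompact_of_seq {A : Set E} (bounded : ∃ C : ℝ, ∀ x ∈ A, ‖x‖ ≤ C)
    (hA : ∀ a : ℕ → E, (∀ n, a n ∈ A) →
      ∃ (x : E) (l : Filter ℕ), l.NeBot ∧ l ≤ atTop ∧ WeakTendsto a l x) :
    IsRelWeaklyCompact A := by
  obtain ⟨C, hC⟩ := bounded
  refine NormedSpace.isCompact_closure_of_isBounded ℝ _ _ ?_ fun F hF => ?_
  · rw [Set.preimage_image_eq _ (toWeakSpace ℝ E).injective]
    exact isBounded_iff_forall_norm_le.2 ⟨C, hC⟩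
  obtain ⟨a, a_mem, ha⟩ := exists_seq_eq_inclusionInDoubleDual (WeakDual.toStrongDual F)
    fun S _ hε => exists_mem_forall_abs_sub_lt hF S hε
  obtain ⟨x, l, hl, l_le, hx⟩ := hA a a_mem
  exact ⟨toWeakSpace ℝ E x, DFunLike.ext _ _ fun φ =>
    (DFunLike.congr_fun (ha x l hl l_le hx) φ).symm⟩

end EberleinSmulian

section Krein

variable {Y : Type*} [NormedAddCommGroup Y] [NormedSpace ℝ Y]

section Separable

variable [SecondCountableTopology Y]

theorem exists_injective_dual_seq (Y : Type*) [NormedAddCommGroup Y] [NormedSpace ℝ Y]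
    [SecondCountableTopology Y] :
    ∃ d : ℕ → StrongDual ℝ Y, (∀ k, ‖d k‖ ≤ 1) ∧ Function.Injective fun y k => d k y := by
  obtain ⟨d, d_norm, hd⟩ := exists_separating_seq (TopologicalSpace.IsSeparable.of_separableSpace
    (univ : Set Y))
  refine ⟨d, d_norm, fun y z h => sub_eq_zero.1 (hd _ (mem_univ _) fun k => ?_)⟩
  rw [map_sub, sub_eq_zero]
  exact congrFun h k

variable [CompleteSpace Y] [MeasurableSpace Y] [BorelSpace Y]

theorem measurableEmbedding_dual_seq {d : ℕ → StrongDual ℝ Y}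
    (hd : Function.Injective fun y k => d k y) : MeasurableEmbedding fun y k => d k y :=
  Continuous.measurableEmbedding (by fun_prop) hd

theorem measurable_of_forall_dual {S : Type*} [MeasurableSpace S] {f : S → Y}
    (hf : ∀ φ : StrongDual ℝ Y, Measurable fun s => φ (f s)) : Measurable f := by
  obtain ⟨d, -, hd⟩ := exists_injective_dual_seq Y
  rw [← (measurableEmbedding_dual_seq hd).measurable_comp_iff]
  exact measurable_pi_lambda _ fun k => hf (d k)

end Separable

section Barycenter

variable {K : Type*} [MeasurableSpace K] {i : K → Y}

theorem weakTendsto_integral_probabilityMeasure [CompleteSpace Y] [TopologicalSpace K]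
    [CompactSpace K] [OpensMeasurableSpace K]
    (integrable : ∀ m : ProbabilityMeasure K, Integrable i (m : Measure K))
    (continuous : ∀ φ : StrongDual ℝ Y, Continuous fun k => φ (i k)) (m : ProbabilityMeasure K) :
    WeakTendsto (fun m : ProbabilityMeasure K => ∫ k, i k ∂(m : Measure K)) (𝓝 m)
      (∫ k, i k ∂(m : Measure K)) := by
  intro φ
  simp only [← φ.integral_comp_comm (integrable _)]
  exact (ProbabilityMeasure.continuous_integral_boundedContinuousFunction
    (BoundedContinuousFunction.mkOfCompact ⟨_, continuous φ⟩)).tendsto m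

theorem convex_range_integral_probabilityMeasure
    (integrable : ∀ m : ProbabilityMeasure K, Integrable i (m : Measure K)) :
    Convex ℝ (range fun m : ProbabilityMeasure K => ∫ k, i k ∂(m : Measure K)) := by
  rintro _ ⟨m, rfl⟩ _ ⟨n, rfl⟩ s t hs ht hst
  have total : IsProbabilityMeasure
      (ENNReal.ofReal s • (m : Measure K) + ENNReal.ofReal t • (n : Measure K)) :=
    ⟨by simp [← ENNReal.ofReal_add hs ht, hst]⟩
  refine ⟨⟨_, total⟩, ?_⟩
  change ∫ k, i k ∂(ENNReal.ofReal s • (m : Measure K) + ENNReal.ofReal t • (n : Measure K)) = _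
  rw [integral_add_measure ((integrable m).smul_measure ENNReal.ofReal_ne_top)
    ((integrable n).smul_measure ENNReal.ofReal_ne_top), integral_smul_measure,
    integral_smul_measure, ENNReal.toReal_ofReal hs, ENNReal.toReal_ofReal ht]

end Barycenter

theorem IsWeaklyCompact.exists_convex [CompleteSpace Y] [SecondCountableTopology Y] {W : Set Y}
    (hW : IsWeaklyCompact W) : ∃ V, IsWeaklyCompact V ∧ Convex ℝ V ∧ W ⊆ V := by
  borelize Y
  let K : Type _ := toWeakSpace ℝ Y '' W
  have : T2Space K := inferInstanceAs (T2Space (toWeakSpace ℝ Y '' W))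
  have : CompactSpace K := isCompact_iff_compactSpace.1 hW
  borelize K
  let i : K → Y := fun k => (toWeakSpace ℝ Y).symm k
  have i_continuous (φ : StrongDual ℝ Y) : Continuous fun k => φ (i k) :=
    (continuous_dual_weakSpace φ).comp continuous_subtype_val
  have i_measurable : Measurable i :=
    measurable_of_forall_dual fun φ => (i_continuous φ).measurable
  obtain ⟨C, hC⟩ := IsRelWeaklyCompact.exists_norm_le (IsCompact.closure hW)
  have i_norm : ∀ k, ‖i k‖ ≤ C := by
    rintro ⟨_, w, hw, rfl⟩
    simpa [i] using hC w hw
  have i_integrable (m : ProbabilityMeasure K) : Integrable i (m : Measure K) :=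
    Integrable.of_bound i_measurable.aestronglyMeasurable C (Eventually.of_forall i_norm)
  refine ⟨range fun m : ProbabilityMeasure K => ∫ k, i k ∂(m : Measure K), ?_,
    convex_range_integral_probabilityMeasure i_integrable, fun w hw => ?_⟩
  · rw [IsWeaklyCompact, ← range_comp]
    exact isCompact_range (continuous_iff_continuousAt.2 fun m =>
      weakTendsto_iff_tendsto_toWeakSpace.1
        (weakTendsto_integral_probabilityMeasure i_integrable i_continuous m))
  · let k : K := ⟨toWeakSpace ℝ Y w, w, hw, rfl⟩
    exact ⟨⟨Measure.dirac k, inferInstance⟩, (integral_dirac i k).trans (by simp [i, k])⟩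

end Krein

section BoundedConvergence

variable {S E : Type*} [MeasurableSpace S] {ν : Measure S} [IsFiniteMeasure ν]
  [NormedAddCommGroup E] [NormedSpace ℝ E]

/-- The density with respect to `ν` of the set function `A ↦ φ (1_A f)`, for a functional `φ` on
`L¹(ν, E)` and `f` square integrable. -/
def localDensity (φ : StrongDual ℝ (Lp E 1 ν)) : Lp E 2 ν →ₗ[ℝ] Lp ℝ 2 ν where
  toFun f := (InnerProductSpace.toDual ℝ (Lp ℝ 2 ν)).symm
    (φ ∘L (ContinuousLinearMap.lsmul ℝ ℝ).flip.holderL ν 2 2 1 f)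
  map_add' f g := by simp
  map_smul' c f := by simp

theorem setIntegral_localDensity (φ : StrongDual ℝ (Lp E 1 ν)) (f : Lp E 2 ν) {A : Set S}
    (hA : MeasurableSet A) {g : Lp E 1 ν} (hg : g =ᵐ[ν] A.indicator f) :
    ∫ s in A, localDensity φ f s ∂ν = φ g := by
  rw [← L2.inner_indicatorConstLp_one (𝕜 := ℝ) hA (measure_ne_top ν A), real_inner_comm]
  refine (InnerProductSpace.toDual_symm_apply ..).trans (congrArg φ (Lp.ext ?_))
  refine (ContinuousLinearMap.coeFn_holder _ _ _).trans ?_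
  filter_upwards [hg, indicatorConstLp_coeFn (p := 2) (hs := hA) (hμs := measure_ne_top ν A)
    (c := (1 : ℝ))] with s hgs hs
  by_cases hsA : s ∈ A <;> simp [hgs, hs, hsA]

theorem abs_localDensity_le (φ : StrongDual ℝ (Lp E 1 ν)) (f : Lp E 2 ν) :
    ∀ᵐ s ∂ν, |localDensity φ f s| ≤ ‖φ‖ * ‖f s‖ := by
  have density_int : Integrable (localDensity φ f) ν := (Lp.memLp _).integrable one_le_two
  have f_int : Integrable f ν := (Lp.memLp f).integrable one_le_two
  have bound {A : Set S} (hA : MeasurableSet A) :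
      |∫ s in A, localDensity φ f s ∂ν| ≤ ∫ s in A, ‖φ‖ * ‖f s‖ ∂ν := by
    rw [setIntegral_localDensity φ f hA (f_int.indicator hA).coeFn_toL1, integral_const_mul,
      ← integral_indicator hA]
    refine (φ.le_opNorm _).trans_eq ?_
    rw [L1.norm_of_fun_eq_integral_norm]
    simp only [norm_indicator_eq_indicator_norm]
  have upper : localDensity φ f ≤ᵐ[ν] fun s => ‖φ‖ * ‖f s‖ :=
    ae_le_of_forall_setIntegral_le density_int (f_int.norm.const_mul _) fun A hA _ =>
      (le_abs_self _).trans (bound hA)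
  have lower : (fun s => -localDensity φ f s) ≤ᵐ[ν] fun s => ‖φ‖ * ‖f s‖ :=
    ae_le_of_forall_setIntegral_le density_int.neg (f_int.norm.const_mul _) fun A hA _ => by
      rw [integral_neg]
      exact (neg_le_abs _).trans (bound hA)
  filter_upwards [upper, lower] with s h_up h_low
  exact abs_le'.2 ⟨h_up, h_low⟩

theorem abs_sum_mul_le_of_rat {κ : Type*} [Fintype κ] {u : κ → E} {c : κ → ℝ} {M : ℝ}
    (h : ∀ q : κ → ℚ, |∑ i, (q i : ℝ) * c i| ≤ M * ‖∑ i, (q i : ℝ) • u i‖) (a : κ → ℝ) :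
    |∑ i, a i * c i| ≤ M * ‖∑ i, a i • u i‖ := by
  have dense : DenseRange (Pi.map fun (_ : κ) (r : ℚ) => (r : ℝ)) :=
    DenseRange.piMap fun _ => Rat.denseRange_cast
  refine dense.induction_on (p := fun a => |∑ i, a i * c i| ≤ M * ‖∑ i, a i • u i‖) a ?_ h
  exact isClosed_le (by fun_prop) (by fun_prop)

-- The functional exists by Helly's theorem, since `|localDensity φ f| ≤ ‖φ‖ ‖f‖` holds almost
-- everywhere for the countably many rational combinations `f` of the family.
theorem ae_exists_dual_eq_localDensity {ι : Type*} [Countable ι] (φ : StrongDual ℝ (Lp E 1 ν))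
    (f : ι → Lp E 2 ν) :
    ∀ᵐ s ∂ν, ∃ ψ : StrongDual ℝ E, ∀ i, ψ (f i s) = localDensity φ (f i) s := by
  have rational : ∀ᵐ s ∂ν, ∀ (t : Finset ι) (q : t → ℚ),
      |∑ i, (q i : ℝ) * localDensity φ (f i) s| ≤ ‖φ‖ * ‖∑ i, (q i : ℝ) • f i s‖ := by
    refine ae_all_iff.2 fun t => ae_all_iff.2 fun q => ?_
    have smul_f : ∀ᵐ s ∂ν, ∀ i : t, ((q i : ℝ) • f i) s = (q i : ℝ) • f i s :=
      ae_all_iff.2 fun i => Lp.coeFn_smul _ _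
    have smul_density : ∀ᵐ s ∂ν, ∀ i : t, ((q i : ℝ) • localDensity φ (f i)) s =
        (q i : ℝ) • localDensity φ (f i) s :=
      ae_all_iff.2 fun i => Lp.coeFn_smul _ _
    filter_upwards [abs_localDensity_le φ (∑ i, (q i : ℝ) • f i), smul_f, smul_density,
      Lp.coeFn_finsetSum Finset.univ fun i : t => (q i : ℝ) • f i,
      Lp.coeFn_finsetSum Finset.univ fun i : t => (q i : ℝ) • localDensity φ (f i)]
      with s bound smul_f smul_density sum_f sum_density
    simp only [map_sum, map_smul] at bound
    rw [sum_f, sum_density] at bound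
    simpa only [Finset.sum_apply, smul_f, smul_density, smul_eq_mul] using bound
  filter_upwards [rational] with s hs
  obtain ⟨ψ, -, hψ⟩ := exists_dual_eq_of_abs_linearCombination_le (fun i => f i s)
    (fun i => localDensity φ (f i) s) ‖φ‖ (norm_nonneg _) fun a => by
      have := abs_sum_mul_le_of_rat (hs a.support) fun i : a.support => a i
      rwa [Finset.sum_coe_sort a.support fun i => a i * localDensity φ (f i) s,
        Finset.sum_coe_sort a.support fun i => a i • f i s] at this
  exact ⟨ψ, hψ⟩

theorem ae_tendsto_localDensity (φ : StrongDual ℝ (Lp E 1 ν)) {f : ℕ → Lp E 2 ν} {g : Lp E 2 ν}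
    (lim : ∀ᵐ s ∂ν, WeakTendsto (fun k => f k s) atTop (g s)) :
    ∀ᵐ s ∂ν, Tendsto (fun k => localDensity φ (f k) s) atTop (𝓝 (localDensity φ g s)) := by
  filter_upwards [ae_exists_dual_eq_localDensity φ fun i : Option ℕ => i.elim g f, lim]
    with s ⟨ψ, hψ⟩ hs
  rw [← show ψ (g s) = localDensity φ g s from hψ none]
  exact (hs ψ).congr fun k => hψ (some k)

theorem weakTendsto_of_ae {h : ℕ → Lp E 1 ν} {g : Lp E 1 ν} {C : ℝ}
    (h_le : ∀ k, ∀ᵐ s ∂ν, ‖h k s‖ ≤ C)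
    (lim : ∀ᵐ s ∂ν, WeakTendsto (fun k => h k s) atTop (g s)) : WeakTendsto h atTop g := by
  have g_le : ∀ᵐ s ∂ν, ‖g s‖ ≤ C := by
    filter_upwards [lim, ae_all_iff.2 h_le] with s lim_s h_le_s
    exact lim_s.norm_le (Eventually.of_forall h_le_s)
  have mem {f : Lp E 1 ν} (hf : ∀ᵐ s ∂ν, ‖f s‖ ≤ C) : MemLp f 2 ν :=
    MemLp.of_bound (Lp.stronglyMeasurable f).aestronglyMeasurable C hf
  intro φ
  have apply_eq {f : Lp E 1 ν} (hf : ∀ᵐ s ∂ν, ‖f s‖ ≤ C) :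
      φ f = ∫ s, localDensity φ ((mem hf).toLp f) s ∂ν := by
    rw [← setIntegral_univ, setIntegral_localDensity φ _ MeasurableSet.univ]
    rw [indicator_univ]
    exact (mem hf).coeFn_toLp.symm
  simp only [apply_eq (h_le _), apply_eq g_le]
  refine tendsto_integral_of_dominated_convergence (fun _ => ‖φ‖ * C)
    (fun k => Lp.aestronglyMeasurable _) (integrable_const _) (fun k => ?_)
    (ae_tendsto_localDensity φ ?_)
  · filter_upwards [abs_localDensity_le φ ((mem (h_le k)).toLp (h k)),
      (mem (h_le k)).coeFn_toLp, h_le k] with s bound h_eq h_le_s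
    rw [h_eq] at bound
    exact bound.trans (by gcongr)
  · filter_upwards [lim, (mem g_le).coeFn_toLp, ae_all_iff.2 fun k => (mem (h_le k)).coeFn_toLp]
      with s lim_s g_eq h_eq
    simpa only [h_eq, g_eq] using lim_s

end BoundedConvergence

section WeakLimits

theorem isWeaklyCompact_of_ultrafilter {E : Type*} [NormedAddCommGroup E] [NormedSpace ℝ E]
    {W : Set E} (h : ∀ U : Ultrafilter E, W ∈ U → ∃ x ∈ W, WeakTendsto id U x) :
    IsWeaklyCompact W := by
  refine isCompact_iff_ultrafilter_le_nhds'.2 fun U hU => ?_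
  obtain ⟨x, hxW, hx⟩ := h (U.map (toWeakSpace ℝ E).symm) <| by
    rw [Ultrafilter.mem_map]
    exact mem_of_superset hU (by rintro _ ⟨w, hw, rfl⟩; simpa using hw)
  refine ⟨_, mem_image_of_mem _ hxW, ?_⟩
  simpa [Tendsto, Filter.map_map, Function.comp_def] using weakTendsto_iff_tendsto_toWeakSpace.1 hx

theorem IsWeaklyCompact.exists_mem_weakTendsto {ι E : Type*} [NormedAddCommGroup E]
    [NormedSpace ℝ E] {W : Set E} (hW : IsWeaklyCompact W) {u : ι → E} {U : Ultrafilter ι}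
    (hu : ∀ᶠ i in U, u i ∈ W) : ∃ x ∈ W, WeakTendsto u U x := by
  obtain ⟨_, ⟨x, hxW, rfl⟩, hx⟩ :=
    IsCompact.ultrafilter_le_nhds hW (U.map fun i => toWeakSpace ℝ E (u i)) <| by
      rw [le_principal_iff]
      exact mem_map.2 (hu.mono fun i hi => mem_image_of_mem _ hi)
  exact ⟨x, hxW, weakTendsto_iff_tendsto_toWeakSpace.2 hx⟩

section Hilbert

variable {ι H : Type*} [NormedAddCommGroup H] [InnerProductSpace ℝ H] [CompleteSpace H]

theorem exists_weakTendsto_of_norm_le {u : ι → H} {C : ℝ} (hu : ∀ i, ‖u i‖ ≤ C)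
    (U : Ultrafilter ι) : ∃ x, WeakTendsto u U x := by
  let D := InnerProductSpace.toDual ℝ H
  obtain ⟨w, -, hw⟩ := (WeakDual.isCompact_closedBall (0 : StrongDual ℝ H) C).ultrafilter_le_nhds
    (U.map fun i => StrongDual.toWeakDual (D (u i))) <| by
      rw [le_principal_iff]
      exact mem_map.2 (Eventually.of_forall fun i => by simpa [D] using hu i)
  refine ⟨D.symm (WeakDual.toStrongDual w), fun φ => ?_⟩
  have eval : Tendsto (fun i => D (u i) (D.symm φ)) U (𝓝 (w (D.symm φ))) :=
    ((WeakDual.eval_continuous (D.symm φ)).tendsto w).comp hw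
  have inner_eq (y : H) : φ y = inner ℝ y (D.symm φ) := by
    rw [real_inner_comm]
    exact (InnerProductSpace.toDual_symm_apply (𝕜 := ℝ)).symm
  simp only [inner_eq]
  convert eval using 2
  · rfl
  · exact InnerProductSpace.toDual_symm_apply (𝕜 := ℝ)

theorem exists_injective_clm_lp_two (Y : Type*) [NormedAddCommGroup Y] [NormedSpace ℝ Y]
    [SecondCountableTopology Y] :
    ∃ T : Y →L[ℝ] lp (fun _ : ℕ => ℝ) 2, Function.Injective T := by
  obtain ⟨d, d_norm, d_inj⟩ := exists_injective_dual_seq Y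
  have weight_mem : Memℓp (fun k : ℕ => (1 / 2 : ℝ) ^ k) 2 := by
    refine memℓp_gen ?_
    have geometric : Summable fun k : ℕ => (1 / 4 : ℝ) ^ k :=
      summable_geometric_of_lt_one (by norm_num) (by norm_num)
    refine geometric.congr fun k => ?_
    rw [ENNReal.toReal_ofNat, Real.rpow_two, Real.norm_eq_abs, sq_abs, ← pow_mul, mul_comm, pow_mul]
    norm_num
  have coord_le (y : Y) (k : ℕ) :
      ‖(1 / 2 : ℝ) ^ k * d k y‖ ≤ ‖(‖y‖ • (⟨_, weight_mem⟩ : lp (fun _ : ℕ => ℝ) 2)) k‖ := by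
    rw [norm_mul, lp.coeFn_smul, Pi.smul_apply, norm_smul, norm_norm, mul_comm]
    gcongr
    exact (d k).le_of_opNorm_le (d_norm k) y |>.trans_eq (one_mul _)
  let T : Y →ₗ[ℝ] lp (fun _ : ℕ => ℝ) 2 :=
    { toFun y := ⟨fun k => (1 / 2 : ℝ) ^ k * d k y, (lp.memℓp _).mono' (coord_le y)⟩
      map_add' y z := by ext k; simp [mul_add]; rfl
      map_smul' c y := by ext k; simp [mul_left_comm] }
  refine ⟨T.mkContinuous ‖(⟨_, weight_mem⟩ : lp (fun _ : ℕ => ℝ) 2)‖ fun y => ?_,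
    fun y z hyz => d_inj (funext fun k => ?_)⟩
  · rw [mul_comm]
    exact (lp.norm_mono two_ne_zero (coord_le y)).trans_eq (by rw [norm_smul, norm_norm])
  · have := congrArg (fun h : lp (fun _ : ℕ => ℝ) 2 => h k) hyz
    simpa [T] using this

end Hilbert

section Functions

variable {S E F : Type*} [MeasurableSpace S] {ν : Measure S} [NormedAddCommGroup E]
  [NormedSpace ℝ E] [NormedAddCommGroup F] [NormedSpace ℝ F]

theorem exists_weakTendsto_of_ae_norm_le {ι H : Type*} [NormedAddCommGroup H]
    [InnerProductSpace ℝ H] [CompleteSpace H] [IsFiniteMeasure ν] {f : ι → Lp H 1 ν} {C : ℝ}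
    (hf : ∀ i, ∀ᵐ s ∂ν, ‖f i s‖ ≤ C) (U : Ultrafilter ι) : ∃ g, WeakTendsto f U g := by
  have f_mem (i : ι) : MemLp (f i) 2 ν :=
    MemLp.of_bound (Lp.stronglyMeasurable _).aestronglyMeasurable C (hf i)
  obtain ⟨g, hg⟩ := exists_weakTendsto_of_norm_le (u := fun i => (f_mem i).toLp)
    (C := ν.real univ ^ (2 : ℝ≥0∞).toReal⁻¹ * max C 0) (fun i => by
      refine Lp.norm_le_of_ae_bound (le_max_right _ _) ?_
      filter_upwards [hf i, (f_mem i).coeFn_toLp] with s hs f_eq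
      rw [f_eq]
      exact hs.trans (le_max_left _ _)) U
  let inclusion : Lp H 2 ν →L[ℝ] Lp H 1 ν :=
    (ContinuousLinearMap.lsmul ℝ ℝ).holderL ν 2 2 1 (Lp.const 2 ν (1 : ℝ))
  refine ⟨inclusion g, ?_⟩
  convert hg.map inclusion with i
  refine Lp.ext ?_
  filter_upwards [(f_mem i).coeFn_toLp, Lp.coeFn_const 2 ν (1 : ℝ), ContinuousLinearMap.coeFn_holder
    (r := 1)
    (ContinuousLinearMap.lsmul ℝ ℝ) (Lp.const 2 ν (1 : ℝ)) (f_mem i).toLp] with s f_eq const_eq h_eq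
  refine (h_eq.trans ?_).symm
  rw [f_eq, const_eq]
  simp

theorem IsRelWeaklyCompact.exists_weakTendsto_of_map {W : Set E} (hW : IsRelWeaklyCompact W)
    {T : E →L[ℝ] F} (hT : Function.Injective T) {h : ℕ → E} (hh : ∀ k, h k ∈ W) {z : F}
    (lim : Tendsto (fun k => T (h k)) atTop (𝓝 z)) :
    ∃ y, T y = z ∧ WeakTendsto h atTop y := by
  have limit_map {U : Ultrafilter ℕ} (hU : (U : Filter ℕ) ≤ atTop) {x : E}
      (hx : WeakTendsto h U x) : T x = z :=
    (hx.map T).unique fun φ => (φ.continuous.tendsto z).comp (lim.mono_left hU)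
  obtain ⟨y, hy⟩ := hW.exists_weakTendsto hh (hyperfilter ℕ)
  have y_map := limit_map Nat.hyperfilter_le_atTop hy
  refine ⟨y, y_map, fun φ => (tendsto_iff_ultrafilter _ _ _).2 fun U hU => ?_⟩
  obtain ⟨x, hx⟩ := hW.exists_weakTendsto hh U
  rw [← hT ((limit_map hU hx).trans y_map.symm)]
  exact hx φ

theorem aestronglyMeasurable_of_weakTendsto_ae [CompleteSpace E] [SecondCountableTopology E]
    {h : ℕ → S → E} {g : S → E} (hh : ∀ k, AEStronglyMeasurable (h k) ν)
    (lim : ∀ᵐ s ∂ν, WeakTendsto (fun k => h k s) atTop (g s)) : AEStronglyMeasurable g ν := by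
  borelize E
  obtain ⟨d, -, hd⟩ := exists_injective_dual_seq E
  have coord (i : ℕ) : AEMeasurable (fun s => d i (g s)) ν :=
    aemeasurable_of_tendsto_metrizable_ae' (fun k => (d i).measurable.comp_aemeasurable
      (hh k).aemeasurable) (lim.mono fun s hs => hs (d i))
  exact ((measurableEmbedding_dual_seq hd).aemeasurable_comp_iff.1
    (aemeasurable_pi_lambda _ coord)).aestronglyMeasurable

theorem mem_convexHull_ae {V : Set E} (hV : Convex ℝ V) {A : Set (Lp E 1 ν)}
    (hA : ∀ f ∈ A, ∀ᵐ s ∂ν, f s ∈ V) : ∀ f ∈ convexHull ℝ A, ∀ᵐ s ∂ν, f s ∈ V := by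
  refine convexHull_min (t := {f : Lp E 1 ν | ∀ᵐ s ∂ν, f s ∈ V}) hA ?_
  intro f hf g hg a b ha hb hab
  filter_upwards [hf, hg, Lp.coeFn_add (a • f) (b • g), Lp.coeFn_smul a f, Lp.coeFn_smul b g]
    with s hfs hgs add_eq smul_f smul_g
  rw [add_eq, Pi.add_apply, smul_f, smul_g]
  exact hV hfs hgs ha hb hab

theorem exists_seq_convexHull_tendsto {ι : Type*} {f : ι → E} {l : Filter ι} [l.NeBot]
    {T : E →L[ℝ] F} {z : F} (hz : WeakTendsto (fun i => T (f i)) l z) :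
    ∃ h : ℕ → E, (∀ k, h k ∈ convexHull ℝ (range f)) ∧ Tendsto (fun k => T (h k)) atTop (𝓝 z) := by
  have : z ∈ closure (T '' convexHull ℝ (range f)) :=
    hz.mem_of_convex ((convex_convexHull ℝ _).linear_image T.toLinearMap).closure isClosed_closure
      (Eventually.of_forall fun i => subset_closure (mem_image_of_mem _
        (subset_convexHull ℝ _ (mem_range_self i))))
  obtain ⟨t, ht, t_lim⟩ := mem_closure_iff_seq_limit.1 this
  choose h h_mem h_eq using ht
  exact ⟨h, h_mem, by simpa only [h_eq] using t_lim⟩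

theorem exists_compLpL_eq_and_dual_eq [CompleteSpace E] [SecondCountableTopology E]
    [IsFiniteMeasure ν] {V : Set E} (hV : IsWeaklyCompact V) (V_convex : Convex ℝ V)
    {T : E →L[ℝ] F} (hT : Function.Injective T) {ι : Type*} {f : ι → Lp E 1 ν}
    (hf : ∀ i, ∀ᵐ s ∂ν, f i s ∈ V) {l : Filter ι} [l.NeBot] (φ : StrongDual ℝ (Lp E 1 ν))
    {G : Lp F 1 ν} {c : ℝ}
    (lim : WeakTendsto (fun i => (T.compLpL 1 ν (f i), φ (f i))) l (G, c)) :
    ∃ g : Lp E 1 ν, T.compLpL 1 ν g = G ∧ φ g = c := by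
  have hV' : IsRelWeaklyCompact V := IsCompact.closure hV
  obtain ⟨C, hC⟩ := hV'.exists_norm_le
  obtain ⟨h, h_hull, h_lim⟩ := exists_seq_convexHull_tendsto (T := (T.compLpL 1 ν).prod φ) lim
  have h_mem (k : ℕ) : ∀ᵐ s ∂ν, h k s ∈ V :=
    mem_convexHull_ae V_convex (forall_mem_range.2 hf) _ (h_hull k)
  obtain ⟨h_map, h_dual⟩ := (Prod.tendsto_iff _ _).1 h_lim
  obtain ⟨ψ, ψ_mono, hψ⟩ := (tendstoInMeasure_of_tendsto_Lp h_map).exists_seq_tendsto_ae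
  have pointwise : ∀ᵐ s ∂ν, ∃ y, T y = G s ∧ WeakTendsto (fun k => h (ψ k) s) atTop y := by
    filter_upwards [hψ, ae_all_iff.2 h_mem, ae_all_iff.2 fun k => T.coeFn_compLpL (h k)]
      with s lim_s mem_s map_s
    refine hV'.exists_weakTendsto_of_map hT (fun k => mem_s (ψ k)) (lim_s.congr fun k => ?_)
    exact map_s (ψ k)
  obtain ⟨g, hg⟩ := skolem.1 pointwise
  have g_le : ∀ᵐ s ∂ν, ‖g s‖ ≤ C := by
    filter_upwards [hg, ae_all_iff.2 h_mem] with s ⟨_, lim_s⟩ mem_s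
    exact lim_s.norm_le (Eventually.of_forall fun k => hC _ (mem_s (ψ k)))
  have g_int : Integrable g ν := Integrable.of_bound (aestronglyMeasurable_of_weakTendsto_ae
    (fun k => (Lp.stronglyMeasurable (h (ψ k))).aestronglyMeasurable) (hg.mono fun s => And.right))
    C g_le
  refine ⟨g_int.toL1 g, Lp.ext ?_, ?_⟩
  · filter_upwards [hg, g_int.coeFn_toL1, T.coeFn_compLpL (p := 1) (g_int.toL1 g)]
      with s ⟨map_s, _⟩ g_eq comp_eq
    rw [comp_eq, g_eq, map_s]
  · refine tendsto_nhds_unique (weakTendsto_of_ae (fun k => (h_mem (ψ k)).mono fun s => hC _) ?_ φ)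
      (h_dual.comp ψ_mono.tendsto_atTop)
    filter_upwards [hg, g_int.coeFn_toL1] with s ⟨_, lim_s⟩ g_eq
    rwa [g_eq]

theorem compLpL_injective {T : E →L[ℝ] F} (hT : Function.Injective T) :
    Function.Injective (T.compLpL 1 ν) := by
  intro f g hfg
  refine Lp.ext ?_
  filter_upwards [T.coeFn_compLpL f, T.coeFn_compLpL g] with s f_eq g_eq
  exact hT (by rw [← f_eq, ← g_eq, hfg])

theorem exists_weakTendsto_of_ae_mem_of_secondCountable [CompleteSpace E]
    [SecondCountableTopology E] [IsFiniteMeasure ν] {ι : Type*} {W : Set E}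
    (hW : IsWeaklyCompact W) {f : ι → Lp E 1 ν} (hf : ∀ i, ∀ᵐ s ∂ν, f i s ∈ W)
    (U : Ultrafilter ι) : ∃ g, WeakTendsto f U g := by
  obtain ⟨V, hV, V_convex, WV⟩ := hW.exists_convex
  obtain ⟨C, hC⟩ := (show IsRelWeaklyCompact W from IsCompact.closure hW).exists_norm_le
  have f_le (i : ι) : ∀ᵐ s ∂ν, ‖f i s‖ ≤ C := (hf i).mono fun s => hC _
  obtain ⟨T, hT⟩ := exists_injective_clm_lp_two E
  obtain ⟨G, hG⟩ := exists_weakTendsto_of_ae_norm_le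
    (f := fun i => T.compLpL 1 ν (f i)) (C := ‖T‖ * C) (fun i => by
      filter_upwards [f_le i, T.coeFn_compLpL (f i)] with s f_le comp_eq
      rw [comp_eq]
      exact T.le_opNorm_of_le f_le) U
  have attained (φ : StrongDual ℝ (Lp E 1 ν)) : ∃ g : Lp E 1 ν,
      T.compLpL 1 ν g = G ∧ Tendsto (fun i => φ (f i)) U (𝓝 (φ g)) := by
    obtain ⟨c, hc⟩ : ∃ c : ℝ, WeakTendsto (fun i => φ (f i)) U c := by
      refine exists_weakTendsto_of_norm_le
        (C := ‖φ‖ * (ν.real univ ^ (1 : ℝ≥0∞).toReal⁻¹ * max C 0))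
        (fun i => φ.le_opNorm_of_le (Lp.norm_le_of_ae_bound (le_max_right _ _) ?_)) U
      exact (f_le i).mono fun s hs => hs.trans (le_max_left _ _)
    obtain ⟨g, g_map, g_dual⟩ := exists_compLpL_eq_and_dual_eq hV V_convex hT
      (fun i => (hf i).mono fun s => @WV _) φ (hG.prodMk hc)
    exact ⟨g, g_map, g_dual ▸ hc (ContinuousLinearMap.id ℝ ℝ)⟩
  obtain ⟨g, g_map, -⟩ := attained 0
  refine ⟨g, fun φ => ?_⟩
  obtain ⟨g', g'_map, lim⟩ := attained φ
  rwa [compLpL_injective hT (g_map.trans g'_map.symm)]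

theorem exists_closed_submodule_forall_mem {f : ℕ → S → E} (hf : ∀ n, StronglyMeasurable (f n)) :
    ∃ M : Submodule ℝ E, IsClosed (M : Set E) ∧ SecondCountableTopology M ∧ ∀ n s, f n s ∈ M := by
  have separable : TopologicalSpace.IsSeparable (⋃ n, range (f n)) :=
    TopologicalSpace.IsSeparable.iUnion fun n => (hf n).isSeparable_range
  refine ⟨(Submodule.span ℝ (⋃ n, range (f n))).topologicalClosure,
    Submodule.isClosed_topologicalClosure _, ?_, fun n s => ?_⟩
  · have closure_separable : TopologicalSpace.IsSeparable
        ((Submodule.span ℝ (⋃ n, range (f n))).topologicalClosure : Set E) := by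
      rw [Submodule.topologicalClosure_coe]
      exact (separable.span (R := ℝ)).closure
    have := closure_separable.separableSpace
    exact UniformSpace.secondCountable_of_separable _
  · exact Submodule.le_topologicalClosure _
      (Submodule.subset_span (mem_iUnion.2 ⟨n, mem_range_self s⟩))

theorem exists_compLpL_subtypeL_eq {M : Submodule ℝ E} {f : Lp E 1 ν} (hf : ∀ s, f s ∈ M) :
    ∃ k : Lp M 1 ν, M.subtypeL.compLpL 1 ν k = f := by
  have integrable : Integrable (fun s => (⟨f s, hf s⟩ : M)) ν :=
    (L1.integrable_coeFn f).norm.mono'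
      (Topology.IsEmbedding.subtypeVal.aestronglyMeasurable_comp_iff.1
        (Lp.stronglyMeasurable f).aestronglyMeasurable)
      (Eventually.of_forall fun s => le_rfl)
  refine ⟨integrable.toL1 _, Lp.ext ?_⟩
  filter_upwards [M.subtypeL.coeFn_compLpL (p := 1) (integrable.toL1 _), integrable.coeFn_toL1]
    with s comp_eq k_eq
  rw [comp_eq, k_eq]
  rfl

theorem IsWeaklyCompact.preimage_submodule {W : Set E} (hW : IsWeaklyCompact W)
    {M : Submodule ℝ E} (hM : IsClosed (M : Set E)) :
    IsWeaklyCompact ((↑) ⁻¹' W : Set M) := by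
  refine isWeaklyCompact_of_ultrafilter fun U hU => ?_
  obtain ⟨x, hxW, hx⟩ := hW.exists_mem_weakTendsto hU
  have hxM : x ∈ M := hx.mem_of_convex M.convex hM (Eventually.of_forall fun m => m.2)
  refine ⟨⟨x, hxM⟩, hxW, fun φ => ?_⟩
  obtain ⟨Φ, hΦ, -⟩ := exists_extension_norm_eq M φ
  rw [← hΦ]
  exact (hx Φ).congr fun m => hΦ m

theorem exists_weakTendsto_of_ae_mem [CompleteSpace E] [IsFiniteMeasure ν] {W : Set E}
    (hW : IsWeaklyCompact W) {f : ℕ → Lp E 1 ν} (hf : ∀ n, ∀ᵐ s ∂ν, f n s ∈ W)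
    (U : Ultrafilter ℕ) : ∃ g, WeakTendsto f U g := by
  obtain ⟨M, M_closed, M_secondCountable, hM⟩ :=
    exists_closed_submodule_forall_mem fun n => Lp.stronglyMeasurable (f n)
  have : CompleteSpace M := M_closed.completeSpace_coe
  choose k hk using fun n => exists_compLpL_subtypeL_eq (hM n)
  obtain ⟨g, hg⟩ := exists_weakTendsto_of_ae_mem_of_secondCountable
    (hW.preimage_submodule M_closed) (f := k) (fun n => by
      filter_upwards [hf n, M.subtypeL.coeFn_compLpL (k n)] with s hs comp_eq
      rw [← hk n, comp_eq] at hs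
      exact hs) U
  refine ⟨M.subtypeL.compLpL 1 ν g, ?_⟩
  simpa only [hk] using hg.map (M.subtypeL.compLpL 1 ν)

end Functions

end WeakLimits

section Tightness

theorem norm_le_of_ae_norm_le_indicator {S E : Type*} [MeasurableSpace S] {ν : Measure S}
    [IsFiniteMeasure ν] [NormedAddCommGroup E] {h : Lp E 1 ν} {A : Set S}
    (hA : MeasurableSet A) {C : ℝ} (hh : ∀ᵐ s ∂ν, ‖h s‖ ≤ A.indicator (fun _ => C) s) :
    ‖h‖ ≤ C * ν.real A := by
  rw [L1.norm_eq_integral_norm, mul_comm, ← smul_eq_mul, ← integral_indicator_const C hA]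
  exact integral_mono_ae (L1.integrable_coeFn h).norm
    ((integrable_const C).indicator hA) hh

variable {S E ι : Type*} [MeasurableSpace S] {ν : Measure S} [NormedAddCommGroup E]
  [NormedSpace ℝ E]

theorem IsWeaklyCompact.isClosed {W : Set E} (hW : IsWeaklyCompact W) : IsClosed W := by
  rw [← preimage_image_eq W (toWeakSpace ℝ E).injective]
  exact (IsCompact.isClosed hW).preimage (toWeakSpaceCLM ℝ E).continuous

theorem IsWeaklyCompact.union {V W : Set E} (hV : IsWeaklyCompact V) (hW : IsWeaklyCompact W) :
    IsWeaklyCompact (V ∪ W) := by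
  unfold IsWeaklyCompact
  rw [image_union]
  exact IsCompact.union hV hW

theorem isWeaklyCompact_singleton (x : E) : IsWeaklyCompact {x} := by
  unfold IsWeaklyCompact
  rw [image_singleton]
  exact isCompact_singleton

theorem measurableSet_preimage_of_isWeaklyCompact {W : Set E} (hW : IsWeaklyCompact W)
    (f : Lp E 1 ν) : MeasurableSet (f ⁻¹' W) := by
  borelize E
  exact (Lp.stronglyMeasurable f).measurable hW.isClosed.measurableSet

theorem exists_weakTendsto_of_tendstoUniformly [CompleteSpace E] {u : ι → E} {v : ℕ → ι → E}
    {y : ℕ → E} {l : Filter ι} [l.NeBot] (hv : ∀ n, WeakTendsto (v n) l (y n))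
    (huv : TendstoUniformly v u atTop) : ∃ x, WeakTendsto u l x := by
  have cauchy : CauchySeq y := by
    refine Metric.cauchySeq_iff'.2 fun ε hε => ?_
    obtain ⟨N, hN⟩ := eventually_atTop.1 (Metric.tendstoUniformly_iff.1 huv (ε / 3) (by positivity))
    refine ⟨N, fun n hn => lt_of_le_of_lt ?_ (show ε / 3 + ε / 3 < ε by linarith)⟩
    rw [dist_eq_norm]
    have := (hv n).sub (hv N)
    refine this.norm_le (Eventually.of_forall fun i => ?_)
    rw [← dist_eq_norm]
    exact (dist_triangle_left _ _ (u i)).trans (add_le_add (hN n hn i).le (hN N le_rfl i).le)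
  obtain ⟨x, hx⟩ := cauchySeq_tendsto_of_complete cauchy
  refine ⟨x, fun φ => TendstoUniformlyOnFilter.tendsto_of_eventually_tendsto
    ((tendstoUniformly_iff_tendstoUniformlyOnFilter.1
      (φ.uniformContinuous.comp_tendstoUniformly huv)).mono_right le_top)
    (Eventually.of_forall fun n => hv n φ) ((φ.continuous.tendsto x).comp hx)⟩

/-- Uniform weak tightness: up to small sets, the functions of the family take their values in a
common weakly compact set. This is the second condition in the definition of a δS-set. -/
def WeaklyTight (ν : Measure S) (f : ι → S → E) : Prop :=
  ∀ ε : ℝ≥0∞, ε ≠ 0 → ∃ W : Set E, IsWeaklyCompact W ∧ ∀ i, ν {s | f i s ∉ W} ≤ ε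

theorem WeaklyTight.exists_weakTendsto [CompleteSpace E] [IsFiniteMeasure ν] {f : ℕ → Lp E 1 ν}
    (hf : WeaklyTight ν fun n => f n) {C : ℝ} (f_le : ∀ n, ∀ᵐ s ∂ν, ‖f n s‖ ≤ C)
    (U : Ultrafilter ℕ) : ∃ g, WeakTendsto f U g := by
  choose W hW W_le using fun m : ℕ => hf (ENNReal.ofReal (1 / (m + 1)))
    (ENNReal.ofReal_pos.2 Nat.one_div_pos_of_nat).ne'
  have W_meas (m n : ℕ) : MeasurableSet (f n ⁻¹' W m) :=
    measurableSet_preimage_of_isWeaklyCompact (hW m) (f n)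
  let v (m n : ℕ) : Lp E 1 ν := ((Lp.memLp (f n)).indicator (W_meas m n)).toLp
  have v_eq (m n : ℕ) : v m n =ᵐ[ν] (f n ⁻¹' W m).indicator (f n) := MemLp.coeFn_toLp _
  have v_mem (m n : ℕ) : ∀ᵐ s ∂ν, v m n s ∈ W m ∪ {0} := by
    filter_upwards [v_eq m n] with s hs
    rw [hs]
    by_cases hs : f n s ∈ W m
    · exact Or.inl (by rwa [indicator_of_mem (mem_preimage.2 hs)])
    · exact Or.inr (indicator_of_notMem (mem_preimage.not.2 hs) _)
  choose y hy using fun m => exists_weakTendsto_of_ae_mem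
    ((hW m).union (isWeaklyCompact_singleton 0)) (v_mem m) U
  refine exists_weakTendsto_of_tendstoUniformly hy ?_
  have dist_le (m n : ℕ) : dist (f n) (v m n) ≤ |C| * (1 / (m + 1)) := by
    rw [dist_eq_norm]
    refine (norm_le_of_ae_norm_le_indicator (W_meas m n).compl (C := |C|) ?_).trans ?_
    · filter_upwards [Lp.coeFn_sub (f n) (v m n), v_eq m n, f_le n] with s sub_eq v_eq f_le
      rw [sub_eq, Pi.sub_apply, v_eq]
      by_cases hs : s ∈ f n ⁻¹' W m
      · simp [hs]
      · simpa [hs] using f_le.trans (le_abs_self C)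
    · gcongr
      exact ENNReal.toReal_le_of_le_ofReal Nat.one_div_pos_of_nat.le (W_le m n)
  rw [Metric.tendstoUniformly_iff]
  intro ε hε
  have radius_tendsto := (tendsto_one_div_add_atTop_nhds_zero_nat (𝕜 := ℝ)).const_mul |C|
  rw [mul_zero] at radius_tendsto
  exact (radius_tendsto.eventually_lt_const hε).mono fun m hm n => (dist_le m n).trans_lt hm

end Tightness

section RandomSigns

instance : DiscreteMeasurableSpace ℤˣ :=
  ⟨fun s => ⟨Units.val '' s, .of_discrete, preimage_image_eq s Units.val_injective⟩⟩

/-- The law of a sequence of independent uniform signs, realised as the Haar probability measure of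
the compact group `ℕ → ℤˣ`: only its invariance under sign changes matters here. -/
def signLaw : Measure (ℕ → ℤˣ) := Measure.haarMeasure ⊤

instance : IsProbabilityMeasure signLaw := ⟨Measure.haarMeasure_self⟩

instance : signLaw.IsMulLeftInvariant := inferInstanceAs (Measure.haarMeasure ⊤).IsMulLeftInvariant

variable {S E F : Type*} [MeasurableSpace S] {ν : Measure S} [NormedAddCommGroup E]
  [NormedSpace ℝ E] [NormedAddCommGroup F] [NormedSpace ℝ F]

/-- The mean norm of the random signed combination `∑ i, ± a i • u i`. -/
def signNorm (a : ℕ →₀ ℝ) (u : ℕ → E) : ℝ :=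
  ∫ s, ‖Finsupp.linearCombination ℝ (s • u) a‖ ∂signLaw

theorem coeFn_linearCombination (f : ℕ → Lp E 1 ν) (a : ℕ →₀ ℝ) :
    ⇑(Finsupp.linearCombination ℝ f a) =ᵐ[ν]
      fun ω => Finsupp.linearCombination ℝ (fun i => f i ω) a := by
  simp only [Finsupp.linearCombination_apply, Finsupp.sum]
  have smul_eq : ∀ᵐ ω ∂ν, ∀ i, (a i • f i) ω = a i • f i ω :=
    ae_all_iff.2 fun i => Lp.coeFn_smul _ _
  filter_upwards [Lp.coeFn_finsetSum a.support fun i => a i • f i, smul_eq] with ω sum_eq smul_eq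
  simp only [sum_eq, Finset.sum_apply, smul_eq]

theorem norm_linearCombination_eq_integral (f : ℕ → Lp E 1 ν) (a : ℕ →₀ ℝ) :
    ‖Finsupp.linearCombination ℝ f a‖ =
      ∫ ω, ‖Finsupp.linearCombination ℝ (fun i => f i ω) a‖ ∂ν := by
  rw [L1.norm_eq_integral_norm]
  exact integral_congr_ae ((coeFn_linearCombination f a).fun_comp norm)

theorem continuous_linearCombination_smul (u : ℕ → E) (a : ℕ →₀ ℝ) :
    Continuous fun s : ℕ → ℤˣ => Finsupp.linearCombination ℝ (s • u) a := by
  simp only [Finsupp.linearCombination_apply, Finsupp.sum, Pi.smul_apply']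
  fun_prop

theorem integrable_linearCombination_smul (u : ℕ → E) (a : ℕ →₀ ℝ) :
    Integrable (fun s => Finsupp.linearCombination ℝ (s • u) a) signLaw :=
  (continuous_linearCombination_smul u a).integrable_of_hasCompactSupport
    (HasCompactSupport.of_compactSpace _)

theorem WeakTendsto.units_smul {u : ℕ → E} {l : Filter ℕ} (hu : WeakTendsto u l 0)
    (s : ℕ → ℤˣ) : WeakTendsto (fun n => s n • u n) l 0 := fun φ => by
  have norm_eq (n : ℕ) : ‖φ (s n • u n)‖ = ‖φ (u n)‖ := by
    rcases Int.units_eq_one_or (s n) with h | h <;> simp [h]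
  have := hu φ
  rw [map_zero, tendsto_zero_iff_norm_tendsto_zero] at this ⊢
  simpa only [norm_eq]

theorem weakTendsto_of_norm_le_signNorm {u : ℕ → E} {v : ℕ → F} (hu : WeakTendsto u atTop 0)
    (h : ∀ a, ‖Finsupp.linearCombination ℝ v a‖ ≤ signNorm a u) : WeakTendsto v atTop 0 := by
  obtain ⟨C, u_le⟩ := (isRelWeaklyCompact_range hu).exists_norm_le
  have smul_integrable (n : ℕ) : Integrable (fun s : ℕ → ℤˣ => s n • u n) signLaw :=
    (by fun_prop : Continuous fun s : ℕ → ℤˣ => s n • u n).integrable_of_hasCompactSupport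
      (HasCompactSupport.of_compactSpace _)
  let w (n : ℕ) : Lp E 1 signLaw := (smul_integrable n).toL1 _
  have w_eq : ∀ᵐ s ∂signLaw, ∀ n, w n s = s n • u n :=
    ae_all_iff.2 fun n => Integrable.coeFn_toL1 (smul_integrable n)
  have hw : WeakTendsto w atTop 0 := by
    refine weakTendsto_of_ae (C := C) (fun n => ?_) ?_
    · filter_upwards [w_eq] with s hs
      rw [hs, norm_units_zsmul]
      exact u_le _ (mem_range_self n)
    · filter_upwards [w_eq, Lp.coeFn_zero E 1 signLaw] with s hs zero_eq
      simp only [hs, zero_eq]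
      exact hu.units_smul s
  refine hw.of_norm_linearCombination_le fun a => (h a).trans_eq ?_
  rw [norm_linearCombination_eq_integral]
  refine integral_congr_ae ?_
  filter_upwards [w_eq] with s hs
  simp only [hs]
  rfl

theorem signNorm_nonneg (a : ℕ →₀ ℝ) (u : ℕ → E) : 0 ≤ signNorm a u :=
  integral_nonneg fun _ => norm_nonneg _

theorem signNorm_smul (a : ℕ →₀ ℝ) (s : ℕ → ℤˣ) (u : ℕ → E) :
    signNorm a (s • u) = signNorm a u := by
  calc signNorm a (s • u)
      = ∫ t, ‖Finsupp.linearCombination ℝ ((s * t) • u) a‖ ∂signLaw := by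
        simp only [signNorm, smul_smul, mul_comm s]
    _ = signNorm a u :=
        integral_mul_left_eq_self (fun t => ‖Finsupp.linearCombination ℝ (t • u) a‖) s

theorem signNorm_indicator_le (a : ℕ →₀ ℝ) (u : ℕ → E) (A : Set ℕ) :
    signNorm a (A.indicator u) ≤ signNorm a u := by
  classical
  let σ (i : ℕ) : ℤˣ := if i ∈ A then 1 else -1
  have indicator_eq (i : ℕ) : A.indicator u i = (2 : ℝ)⁻¹ • (u i + σ i • u i) := by
    by_cases hi : i ∈ A
    · simp [σ, hi, ← two_smul ℝ (u i), smul_smul]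
    · simp [σ, hi]
  have combination_eq (s : ℕ → ℤˣ) : Finsupp.linearCombination ℝ (s • A.indicator u) a =
      (2 : ℝ)⁻¹ • (Finsupp.linearCombination ℝ (s • u) a +
        Finsupp.linearCombination ℝ (s • σ • u) a) := by
    simp only [Finsupp.linearCombination_apply, Finsupp.sum, Pi.smul_apply', indicator_eq,
      smul_comm _ (2 : ℝ)⁻¹, smul_add, Finset.smul_sum, Finset.sum_add_distrib]
  have norm_integrable (v : ℕ → E) := (integrable_linearCombination_smul v a).norm
  calc signNorm a (A.indicator u)
      ≤ ∫ s, (2 : ℝ)⁻¹ * (‖Finsupp.linearCombination ℝ (s • u) a‖ +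
          ‖Finsupp.linearCombination ℝ (s • σ • u) a‖) ∂signLaw := by
        refine integral_mono (norm_integrable _)
          (((norm_integrable _).add (norm_integrable _)).const_mul _) fun s => ?_
        simp only [combination_eq, norm_smul, norm_inv, Real.norm_ofNat]
        gcongr
        exact norm_add_le _ _
    _ = (2 : ℝ)⁻¹ * (signNorm a u + signNorm a (σ • u)) := by
        rw [integral_const_mul, integral_add (norm_integrable _) (norm_integrable _)]
        rfl
    _ = signNorm a u := by
        rw [signNorm_smul]
        ring

theorem abs_mul_norm_le_signNorm (a : ℕ →₀ ℝ) (u : ℕ → E) (m : ℕ) :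
    |a m| * ‖u m‖ ≤ signNorm a u := by
  refine le_of_eq_of_le ?_ (signNorm_indicator_le a u {m})
  have combination_eq (s : ℕ → ℤˣ) :
      Finsupp.linearCombination ℝ (s • indicator {m} u) a = a m • s m • u m := by
    rw [Finsupp.linearCombination_apply, Finsupp.sum_eq_single m] <;> simp +contextual
  simp only [signNorm, combination_eq, norm_smul, norm_units_zsmul]
  simp

theorem integrable_prod_units_smul {G : Type*} [NormedAddCommGroup G] {f : S → G}
    (hf : Integrable f ν) (i : ℕ) :
    Integrable (fun p : S × (ℕ → ℤˣ) => p.2 i • f p.1) (ν.prod signLaw) := by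
  have f_integrable : Integrable (fun p : S × (ℕ → ℤˣ) => f p.1) (ν.prod signLaw) :=
    hf.comp_fst signLaw
  refine f_integrable.norm.mono' ?_ (Eventually.of_forall fun p => (norm_units_zsmul _ _).le)
  exact ((measurable_pi_apply i).comp measurable_snd).aestronglyMeasurable.smul f_integrable.1

theorem integrable_prod_linearCombination {f : ℕ → S → E}
    (hf : ∀ i, Integrable (f i) ν) (a : ℕ →₀ ℝ) :
    Integrable (fun p : S × (ℕ → ℤˣ) =>
      Finsupp.linearCombination ℝ (fun i => p.2 i • f i p.1) a) (ν.prod signLaw) := by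
  simp only [Finsupp.linearCombination_apply, Finsupp.sum]
  exact integrable_finsetSum _ fun i _ => (integrable_prod_units_smul (hf i) i).smul (a i)

theorem integrable_signNorm {f : ℕ → S → E} (hf : ∀ i, Integrable (f i) ν)
    (a : ℕ →₀ ℝ) : Integrable (fun ω => signNorm a fun i => f i ω) ν :=
  (integrable_prod_linearCombination hf a).norm.integral_prod_left

theorem signNorm_eq_integral [SFinite ν] (f : ℕ → Lp E 1 ν) (a : ℕ →₀ ℝ) :
    signNorm a f = ∫ ω, signNorm a (fun i => f i ω) ∂ν := by
  have combination_eq (s : ℕ → ℤˣ) : ‖Finsupp.linearCombination ℝ (s • f) a‖ =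
      ∫ ω, ‖Finsupp.linearCombination ℝ (fun i => s i • f i ω) a‖ ∂ν := by
    rw [norm_linearCombination_eq_integral]
    refine integral_congr_ae ?_
    have smul_eq : ∀ᵐ ω ∂ν, ∀ i, (s i • f i) ω = s i • f i ω := ae_all_iff.2 fun i => by
      rcases Int.units_eq_one_or (s i) with h | h
      · simp [h]
      · filter_upwards [Lp.coeFn_neg (f i)] with ω hω
        rw [h, Units.neg_smul, one_smul, Units.neg_smul, one_smul, hω, Pi.neg_apply]
    filter_upwards [smul_eq] with ω hω
    simp only [Pi.smul_apply', hω]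
  simp only [signNorm, combination_eq]
  exact (integral_integral_swap (integrable_prod_linearCombination
    (fun i => L1.integrable_coeFn (f i)) a).norm).symm

end RandomSigns

section UniformIntegrability

variable {S E : Type*} [MeasurableSpace S] {ν : Measure S} [NormedAddCommGroup E]
  [NormedSpace ℝ E]

theorem exists_disjoint_setIntegral_ge {g : ℕ → S → ℝ} (g_integrable : ∀ n, Integrable (g n) ν)
    (g_nonneg : ∀ n s, 0 ≤ g n s) {A : ℕ → Set S} (hA : ∀ n, MeasurableSet (A n))
    (A_summable : ∑' n, ν (A n) ≠ ∞) {ε : ℝ} (hε : 0 < ε) (h : ∀ n, ε ≤ ∫ s in A n, g n s ∂ν) :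
    ∃ (θ : ℕ → ℕ) (B : ℕ → Set S), StrictMono θ ∧ (∀ n, MeasurableSet (B n)) ∧
      Pairwise (Function.onFun Disjoint B) ∧ ∀ n, ε / 2 ≤ ∫ s in B n, g (θ n) s ∂ν := by
  let tail (n : ℕ) : Set S := ⋃ k, A (k + n)
  have tail_meas (n : ℕ) : MeasurableSet (tail n) := MeasurableSet.iUnion fun k => hA _
  have tail_tendsto : Tendsto (ν ∘ tail) atTop (𝓝 0) :=
    tendsto_of_tendsto_of_tendsto_of_le_of_le tendsto_const_nhds
      (ENNReal.tendsto_sum_nat_add _ A_summable) (fun _ => zero_le) fun n => measure_iUnion_le _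
  obtain ⟨θ, hθ, tail_le⟩ : ∃ θ : ℕ → ℕ, StrictMono θ ∧
      ∀ n, ∫ s in tail (θ (n + 1)), g (θ n) s ∂ν ≤ ε / 2 := by
    have (m : ℕ) : ∃ n, m < n ∧ ∫ s in tail n, g m s ∂ν ≤ ε / 2 :=
      ((eventually_gt_atTop m).and (((g_integrable m).tendsto_setIntegral_nhds_zero
        tail_tendsto).eventually_le_const (half_pos hε))).exists
    choose next lt_next tail_le using this
    have next_eq (n : ℕ) : next^[n + 1] 0 = next (next^[n] 0) := Function.iterate_succ_apply' ..
    exact ⟨fun n => next^[n] 0, strictMono_nat_of_lt_succ fun n => next_eq n ▸ lt_next _,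
      fun n => (next_eq n ▸ tail_le _ :)⟩
  refine ⟨θ, fun n => A (θ n) \ tail (θ (n + 1)), hθ, fun n => (hA _).diff (tail_meas _),
    (pairwise_disjoint_on _).2 fun m n hmn => disjoint_left.2 fun s hm hn => hm.2 ?_, fun n => ?_⟩
  · refine mem_iUnion.2 ⟨θ n - θ (m + 1), ?_⟩
    rw [Nat.sub_add_cancel (hθ.monotone hmn)]
    exact hn.1
  · have split_le : ∫ s in A (θ n), g (θ n) s ∂ν ≤
        ∫ s in A (θ n) \ tail (θ (n + 1)) ∪ tail (θ (n + 1)), g (θ n) s ∂ν :=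
      setIntegral_mono_set (g_integrable _).integrableOn (Eventually.of_forall (g_nonneg _))
        (subset_sdiff_union _ _).eventuallyLE
    rw [setIntegral_union disjoint_sdiff_left (tail_meas _) (g_integrable _).integrableOn
      (g_integrable _).integrableOn] at split_le
    linarith [h (θ n), tail_le n]

namespace WeakTendsto

variable {u : ℕ → Lp E 1 ν} {A : ℕ → Set S} {ε : ℝ}

theorem exists_setIntegral_norm_lt_of_disjoint [SFinite ν] (hu : WeakTendsto u atTop 0)
    (hA : ∀ n, MeasurableSet (A n)) (A_disjoint : Pairwise (Function.onFun Disjoint A))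
    (hε : 0 < ε) : ∃ n, ∫ s in A n, ‖u n s‖ ∂ν < ε := by
  by_contra! h
  have const_tendsto : WeakTendsto (fun _ : ℕ => ε) atTop 0 := by
    refine weakTendsto_of_norm_le_signNorm hu fun a => ?_
    have norm_integrable := integrable_signNorm (fun i => L1.integrable_coeFn (u i)) a
    calc ‖Finsupp.linearCombination ℝ (fun _ => ε) a‖
        ≤ ∑ i ∈ a.support, |a i| * ε := by
          refine (norm_sum_le _ _).trans_eq (Finset.sum_congr rfl fun i _ => ?_)
          simp [abs_of_pos hε]
      _ ≤ ∑ i ∈ a.support, ∫ s in A i, signNorm a (fun j => u j s) ∂ν := by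
          refine Finset.sum_le_sum fun i _ =>
            (mul_le_mul_of_nonneg_left (h i) (abs_nonneg _)).trans ?_
          rw [← integral_const_mul]
          exact integral_mono ((L1.integrable_coeFn (u i)).norm.const_mul _).integrableOn
            norm_integrable.integrableOn fun s => abs_mul_norm_le_signNorm a (fun j => u j s) i
      _ = ∫ s in ⋃ i ∈ a.support, A i, signNorm a (fun j => u j s) ∂ν :=
          (integral_biUnion_finset a.support (fun i _ => hA i)
            (fun i _ j _ hij => A_disjoint hij) fun i _ => norm_integrable.integrableOn).symm
      _ ≤ ∫ s, signNorm a (fun j => u j s) ∂ν :=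
          setIntegral_le_integral norm_integrable
            (Eventually.of_forall fun s => signNorm_nonneg _ _)
      _ = signNorm a u := (signNorm_eq_integral u a).symm
  exact hε.ne' (tendsto_nhds_unique tendsto_const_nhds
    (const_tendsto (ContinuousLinearMap.id ℝ ℝ)))

theorem exists_setIntegral_norm_lt [SFinite ν] {x : Lp E 1 ν} (hu : WeakTendsto u atTop x)
    (hA : ∀ n, MeasurableSet (A n)) (A_summable : ∑' n, ν (A n) ≠ ∞) (hε : 0 < ε) :
    ∃ n, ∫ s in A n, ‖u n s‖ ∂ν < ε := by
  by_contra! h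
  obtain ⟨N, hN⟩ := eventually_atTop.1 (((L1.integrable_coeFn x).norm.tendsto_setIntegral_nhds_zero
    (ENNReal.tendsto_atTop_zero_of_tsum_ne_top A_summable)).eventually_le_const (half_pos hε))
  have sub_ge (n : ℕ) : ε / 2 ≤ ∫ s in A (n + N), ‖(u (n + N) - x) s‖ ∂ν := by
    have norm_le : ∫ s in A (n + N), ‖u (n + N) s‖ ∂ν ≤
        ∫ s in A (n + N), (‖(u (n + N) - x) s‖ + ‖x s‖) ∂ν := by
      refine setIntegral_mono_ae (L1.integrable_coeFn _).norm.integrableOn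
        ((L1.integrable_coeFn _).norm.add (L1.integrable_coeFn x).norm).integrableOn ?_
      filter_upwards [Lp.coeFn_sub (u (n + N)) x] with s hs
      rw [hs]
      exact norm_le_norm_sub_add _ _
    rw [integral_add (L1.integrable_coeFn _).norm.integrableOn
      (L1.integrable_coeFn x).norm.integrableOn] at norm_le
    linarith [h (n + N), hN (n + N) (Nat.le_add_left N n)]
  obtain ⟨θ, B, hθ, hB, B_disjoint, B_ge⟩ := exists_disjoint_setIntegral_ge
    (fun n => (L1.integrable_coeFn (u (n + N) - x)).norm) (fun _ _ => norm_nonneg _)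
    (fun n => hA (n + N)) (ne_top_of_le_ne_top A_summable
      (ENNReal.tsum_comp_le_tsum_of_injective (add_left_injective N) _)) (half_pos hε) sub_ge
  obtain ⟨n, hn⟩ := exists_setIntegral_norm_lt_of_disjoint
    ((sub_const_iff.2 hu).comp ((tendsto_add_atTop_nat N).comp hθ.tendsto_atTop)) hB B_disjoint
    (half_pos (half_pos hε))
  exact hn.not_ge (B_ge n)

end WeakTendsto

theorem IsRelWeaklyCompact.unifIntegrableSet [SFinite ν] {K : Set (Lp E 1 ν)}
    (hK : IsRelWeaklyCompact K) : UnifIntegrableSet ν K := by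
  refine ⟨hK.exists_norm_le, fun ε hε => ?_⟩
  by_contra! h
  choose f f_mem A A_le integral_gt using fun n : ℕ => h ((1 / 2) ^ n) (by positivity)
  obtain ⟨x, ψ, hψ, hx⟩ := hK.exists_subseq f_mem
  let B (n : ℕ) : Set S := toMeasurable ν (A (ψ n))
  have B_le (n : ℕ) : ν (B n) ≤ ENNReal.ofReal ((1 / 2) ^ n) := by
    rw [measure_toMeasurable]
    exact (A_le _).trans (ENNReal.ofReal_le_ofReal
      (pow_le_pow_of_le_one (by norm_num) (by norm_num) hψ.le_apply))
  have B_summable : ∑' n, ν (B n) ≠ ∞ :=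
    ne_top_of_le_ne_top summable_geometric_two.tsum_ofReal_ne_top (ENNReal.tsum_le_tsum B_le)
  obtain ⟨n, hn⟩ := hx.exists_setIntegral_norm_lt
    (fun n => measurableSet_toMeasurable ν (A (ψ n))) B_summable hε
  refine (hn.trans (integral_gt (ψ n))).not_ge (setIntegral_mono_set
    (L1.integrable_coeFn _).norm.integrableOn (Eventually.of_forall fun s => norm_nonneg _)
    (subset_toMeasurable ν (A (ψ n))).eventuallyLE)

end UniformIntegrability

section DiffuseMeasures

variable {S T Y : Type*} [MeasurableSpace S] [MeasurableSpace T] [MeasurableSpace Y]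

theorem nullSingletonClass_map [MeasurableSingletonClass T] (ν : Measure S) [NullSingletonClass ν]
    {f : S → T} (hf : Measurable f) (f_inj : Function.Injective f) :
    NullSingletonClass (ν.map f) := ⟨fun x => by
  rw [Measure.map_apply hf (measurableSet_singleton x)]
  exact (subsingleton_singleton.preimage f_inj).measure_zero ν⟩

theorem continuous_cdf (ν : Measure ℝ) [IsProbabilityMeasure ν] [NullSingletonClass ν] :
    Continuous (ProbabilityTheory.cdf ν) := by
  refine continuous_iff_continuousAt.2 fun x => ?_
  have cdf_mono := (ProbabilityTheory.cdf ν).mono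
  rw [cdf_mono.continuousAt_iff_leftLim_eq_rightLim, StieltjesFunction.rightLim_eq]
  have no_jump := (ProbabilityTheory.cdf ν).measure_singleton x
  rw [ProbabilityTheory.measure_cdf, measure_singleton, eq_comm, ENNReal.ofReal_eq_zero] at no_jump
  exact le_antisymm (cdf_mono.leftLim_le le_rfl) (sub_nonpos.1 no_jump)

theorem exists_map_eq_volume_unitInterval (ν : Measure unitInterval) [IsProbabilityMeasure ν]
    [NullSingletonClass ν] :
    ∃ G : unitInterval → unitInterval, Measurable G ∧ ν.map G = volume := by
  have := nullSingletonClass_map ν measurable_subtype_coe Subtype.val_injective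
  have : IsProbabilityMeasure (ν.map Subtype.val) :=
    Measure.isProbabilityMeasure_map measurable_subtype_coe.aemeasurable
  let G (x : unitInterval) : unitInterval :=
    ⟨ν.real (Icc 0 x), measureReal_nonneg, measureReal_le_one⟩
  have G_continuous : Continuous G := by
    refine Continuous.subtype_mk ?_ _
    simp only [← ProbabilityTheory.unitInterval.cdf_eq_real]
    exact (continuous_cdf _).comp continuous_subtype_val
  have G_mono : Monotone G := fun x y hxy =>
    Subtype.mk_le_mk.2 (measureReal_mono (Icc_subset_Icc_right hxy))
  have G_surjective : Function.Surjective G := fun t => by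
    have G_zero : G 0 ≤ t := by simp [G, Measure.real]
    have G_one : t ≤ G 1 := by
      have : Icc (0 : unitInterval) 1 = univ := Icc_bot_top
      simpa [G, ← Subtype.coe_le_coe, this] using t.2.2
    exact mem_range_of_exists_le_of_exists_ge G_continuous ⟨0, G_zero⟩ ⟨1, G_one⟩
  refine ⟨G, G_continuous.measurable, ?_⟩
  have : IsProbabilityMeasure (ν.map G) :=
    Measure.isProbabilityMeasure_map G_continuous.measurable.aemeasurable
  refine Measure.ext_of_Iic _ _ fun t => ?_
  obtain ⟨x, x_mem, le_x⟩ := (isClosed_Iic.preimage G_continuous).isCompact.exists_isGreatest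
    ((G_surjective t).imp fun _ h => h.le : (G ⁻¹' Iic t).Nonempty)
  have preimage_eq : G ⁻¹' Iic t = Icc 0 x := by
    ext y
    exact ⟨fun hy => ⟨y.2.1, le_x hy⟩, fun hy => (G_mono hy.2).trans x_mem⟩
  have G_x : G x = t := by
    obtain ⟨y, hy⟩ := G_surjective t
    exact le_antisymm x_mem (hy.ge.trans (G_mono (le_x hy.le)))
  rw [Measure.map_apply G_continuous.measurable measurableSet_Iic, preimage_eq,
    unitInterval.volume_Iic, ← G_x]
  exact (ofReal_measureReal).symm

theorem exists_map_eq [StandardBorelSpace T] [StandardBorelSpace Y] [Nonempty Y]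
    (ρ : Measure T) [IsFiniteMeasure ρ] [NullSingletonClass ρ] (κ : Measure Y)
    (mass_eq : κ univ = ρ univ) : ∃ θ : T → Y, Measurable θ ∧ ρ.map θ = κ := by
  rcases eq_or_ne (ρ univ) 0 with hρ | hρ
  · refine ⟨fun _ => Classical.arbitrary Y, measurable_const, ?_⟩
    rw [Measure.measure_univ_eq_zero.1 hρ, Measure.map_zero,
      Measure.measure_univ_eq_zero.1 (mass_eq.trans hρ)]
  let e : T → unitInterval := unitInterval.sigmoid ∘ embeddingReal T
  have he : MeasurableEmbedding e := measurableEmbedding_sigmoid_comp_embeddingReal T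
  have inv_mul : (ρ univ)⁻¹ * ρ univ = 1 := ENNReal.inv_mul_cancel hρ (measure_ne_top ρ univ)
  have : IsProbabilityMeasure ((ρ univ)⁻¹ • ρ) := ⟨inv_mul⟩
  have : IsProbabilityMeasure ((ρ univ)⁻¹ • κ) := ⟨by simpa [mass_eq] using inv_mul⟩
  have : NullSingletonClass ((ρ univ)⁻¹ • ρ) := ⟨fun x => by simp⟩
  have := nullSingletonClass_map ((ρ univ)⁻¹ • ρ) he.measurable he.injective
  have := Measure.isProbabilityMeasure_map (μ := (ρ univ)⁻¹ • ρ) he.measurable.aemeasurable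
  obtain ⟨G, hG, map_G⟩ := exists_map_eq_volume_unitInterval (((ρ univ)⁻¹ • ρ).map e)
  obtain ⟨f, hf, map_f⟩ := Measure.exists_measurable_map_eq ((ρ univ)⁻¹ • κ)
  refine ⟨f ∘ G ∘ e, hf.comp (hG.comp he.measurable), ?_⟩
  have map_eq : (ρ univ)⁻¹ • ρ.map (f ∘ G ∘ e) = (ρ univ)⁻¹ • κ := by
    rw [← Measure.map_smul, ← Measure.map_map hf (hG.comp he.measurable),
      ← Measure.map_map hG he.measurable, map_G, map_f]
  have := congrArg (ρ univ • ·) map_eq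
  simpa only [smul_smul, mul_comm (ρ univ), inv_mul, one_smul] using this

theorem exists_minimal_code (ν : Measure S) :
    ∃ c : S → ℕ → Bool, Measurable c ∧ ∀ d : S → ℕ → Bool, Measurable d →
      (ν.prod ν) {p | c p.1 = c p.2} ≤ (ν.prod ν) {p | d p.1 = d p.2} := by
  let collision (c : {c : S → ℕ → Bool // Measurable c}) : ℝ≥0∞ :=
    (ν.prod ν) {p | c.1 p.1 = c.1 p.2}
  obtain ⟨v, -, v_tendsto, v_mem⟩ := exists_seq_tendsto_sInf
    (S := range collision) ⟨_, mem_range_self ⟨fun _ => default, measurable_const⟩⟩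
    (OrderBot.bddBelow _)
  choose e he using v_mem
  refine ⟨fun s n => (e n.unpair.1).1 s n.unpair.2, measurable_pi_iff.2 fun n =>
    (measurable_pi_apply _).comp (e _).2, fun d hd => ?_⟩
  refine (ge_of_tendsto' v_tendsto fun k => ?_).trans (sInf_le ⟨⟨d, hd⟩, rfl⟩)
  rw [← he]
  refine measure_mono fun p hp => funext fun m => ?_
  simpa only [Nat.unpair_pair] using congrFun hp (Nat.pair k m)

theorem exists_code_fibers_atoms (ν : Measure S) [IsFiniteMeasure ν] :
    ∃ c : S → ℕ → Bool, Measurable c ∧ ∀ x B, MeasurableSet B →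
      ν (c ⁻¹' {x} ∩ B) = 0 ∨ ν (c ⁻¹' {x} \ B) = 0 := by
  classical
  obtain ⟨c, hc, c_minimal⟩ := exists_minimal_code ν
  refine ⟨c, hc, fun x B hB => ?_⟩
  let refined (s : S) (n : ℕ) : Bool := Nat.casesOn n (decide (s ∈ B)) (c s)
  have refined_measurable : Measurable refined := measurable_pi_iff.2 fun n => by
    rcases n with - | n
    · exact measurable_to_bool (by simpa [refined, preimage] using hB)
    · exact (measurable_pi_apply n).comp hc
  have rect_meas : MeasurableSet ((c ⁻¹' {x} ∩ B) ×ˢ (c ⁻¹' {x} \ B)) :=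
    ((hc (measurableSet_singleton x)).inter hB).prod ((hc (measurableSet_singleton x)).diff hB)
  have disjoint : Disjoint {p : S × S | refined p.1 = refined p.2}
      ((c ⁻¹' {x} ∩ B) ×ˢ (c ⁻¹' {x} \ B)) :=
    disjoint_left.2 fun p hp hp' => hp'.2.2 (of_decide_eq_true
      ((congrFun hp 0).symm.trans (decide_eq_true hp'.1.2)))
  have subset : {p : S × S | refined p.1 = refined p.2} ∪
      (c ⁻¹' {x} ∩ B) ×ˢ (c ⁻¹' {x} \ B) ⊆ {p | c p.1 = c p.2} :=
    union_subset (fun p hp => funext fun n => congrFun hp (n + 1))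
      fun p hp => hp.1.1.trans hp.2.1.symm
  have collision_le := measure_mono (μ := ν.prod ν) subset
  rw [measure_union disjoint rect_meas, Measure.prod_prod] at collision_le
  have := (collision_le.trans (c_minimal refined refined_measurable)).trans_eq (add_zero _).symm
  exact mul_eq_zero.1 (nonpos_iff_eq_zero.1
    ((ENNReal.add_le_add_iff_left (measure_ne_top _ _)).1 this))

theorem exists_atoms_diffuse_decomposition (ν : Measure S) [IsFiniteMeasure ν] :
    ∃ (F : ℕ → Set S) (c : S → ℕ → Bool), (∀ n, MeasurableSet (F n)) ∧
      (∀ n B, MeasurableSet B → ν (F n ∩ B) = 0 ∨ ν (F n \ B) = 0) ∧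
      Measurable c ∧ NullSingletonClass ((ν.restrict (⋃ n, F n)ᶜ).map c) := by
  obtain ⟨c, hc, fibers_atoms⟩ := exists_code_fibers_atoms ν
  obtain ⟨e, he⟩ := ((Measure.countable_meas_level_set_pos (μ := ν) hc).insert
    fun _ => true).exists_eq_range (insert_nonempty _ _)
  refine ⟨fun n => c ⁻¹' {e n}, c, fun n => hc (measurableSet_singleton _),
    fun n => fibers_atoms (e n), hc, ⟨fun x => ?_⟩⟩
  rw [Measure.map_apply hc (measurableSet_singleton x),
    Measure.restrict_apply (hc (measurableSet_singleton x))]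
  by_cases hx : 0 < ν {s | c s = x}
  · obtain ⟨n, rfl⟩ : x ∈ range e := he ▸ Or.inr hx
    rw [(disjoint_compl_right.mono_left (subset_iUnion (fun n => c ⁻¹' {e n}) n)).inter_eq,
      measure_empty]
  · exact measure_mono_null inter_subset_left (nonpos_iff_eq_zero.1 (not_lt.1 hx))

end DiffuseMeasures

section SignedCopies

variable {S E : Type*} [MeasurableSpace S] {ν : Measure S} [NormedAddCommGroup E]

theorem exists_identDistrib {R T Y : Type*} [MeasurableSpace R] [MeasurableSpace T]
    [MeasurableSpace Y] [StandardBorelSpace T] [StandardBorelSpace Y] [Nonempty Y] {ρ : Measure S}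
    [IsFiniteMeasure ρ] {c : S → T} (hc : Measurable c) [NullSingletonClass (ρ.map c)]
    {P : Measure R} {f : R → Y} (hf : AEMeasurable f P) (mass_eq : P univ = ρ univ) :
    ∃ k : S → Y, Measurable k ∧ ProbabilityTheory.IdentDistrib k f ρ P := by
  obtain ⟨θ, hθ, map_eq⟩ := exists_map_eq (ρ.map c) (P.map f) (by
    rw [Measure.map_apply_of_aemeasurable hf .univ, Measure.map_apply hc .univ, preimage_univ,
      preimage_univ, mass_eq])
  exact ⟨θ ∘ c, hθ.comp hc, (hθ.comp hc).aemeasurable, hf, by rwa [← Measure.map_map hθ hc]⟩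

theorem exists_signed_coupling [MeasurableSpace E] [BorelSpace E] [CompleteSpace E]
    [SecondCountableTopology E] [IsFiniteMeasure ν] {A : Set S} (hA : MeasurableSet A)
    {c : S → ℕ → Bool} (hc : Measurable c) [NullSingletonClass ((ν.restrict A).map c)]
    (g : ℕ → Lp E 1 ν) :
    ∃ (k : S → ℕ → E) (h : ℕ → Lp E 1 ν), Measurable k ∧
      ProbabilityTheory.IdentDistrib k (fun (p : S × (ℕ → ℤˣ)) n => p.2 n • g n p.1)
        (ν.restrict A) ((ν.restrict A).prod signLaw) ∧
      ∀ᵐ ω ∂ν, ∀ n, h n ω = A.indicator (fun ω => k ω n) ω := by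
  have signed_measurable : Measurable fun (p : S × (ℕ → ℤˣ)) n => p.2 n • g n p.1 :=
    measurable_pi_lambda _ fun n => ((measurable_pi_apply n).comp measurable_snd).smul
      ((Lp.stronglyMeasurable (g n)).measurable.comp measurable_fst)
  obtain ⟨k, hk, k_law⟩ := exists_identDistrib hc (ρ := ν.restrict A)
    (P := (ν.restrict A).prod signLaw) signed_measurable.aemeasurable
    (by rw [← univ_prod_univ, Measure.prod_prod, measure_univ (μ := signLaw), mul_one])
  have k_integrable (n : ℕ) : Integrable (A.indicator fun ω => k ω n) ν :=
    (integrable_indicator_iff hA).2 ((k_law.comp (measurable_pi_apply n)).integrable_iff.2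
      (integrable_prod_units_smul (L1.integrable_coeFn (g n)).restrict n))
  exact ⟨k, fun n => (k_integrable n).toL1 _, hk, k_law,
    ae_all_iff.2 fun n => (k_integrable n).coeFn_toL1⟩

theorem prod_signLaw_smul_notMem {f : S → E} {W : Set E} (hW : ∀ y ∈ W, -y ∈ W) (n : ℕ) :
    ν.prod signLaw {p | p.2 n • f p.1 ∉ W} = ν {ω | f ω ∉ W} := by
  have units_smul_mem (s : ℤˣ) (y : E) : s • y ∈ W ↔ y ∈ W := by
    rcases Int.units_eq_one_or s with rfl | rfl
    · simp
    · simpa using ⟨fun h => by simpa using hW _ h, hW y⟩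
  calc ν.prod signLaw {p | p.2 n • f p.1 ∉ W}
      = ν.prod signLaw ({ω | f ω ∉ W} ×ˢ univ) := by
        simp only [units_smul_mem, prod_univ, preimage_ofPred_eq]
    _ = ν {ω | f ω ∉ W} := by
        rw [Measure.prod_prod, measure_univ (μ := signLaw), mul_one]

variable [NormedSpace ℝ E]

theorem exists_signed_copy_of_secondCountable [CompleteSpace E] [SecondCountableTopology E]
    [IsFiniteMeasure ν] {A : Set S} (hA : MeasurableSet A) {c : S → ℕ → Bool} (hc : Measurable c)
    [NullSingletonClass ((ν.restrict A).map c)] (g : ℕ → Lp E 1 ν) :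
    ∃ h : ℕ → Lp E 1 ν,
      (∀ a, ‖Finsupp.linearCombination ℝ h a‖ = ∫ ω in A, signNorm a (fun i => g i ω) ∂ν) ∧
      ∀ W : Set E, IsClosed W → 0 ∈ W → (∀ y ∈ W, -y ∈ W) →
        ∀ n, ν {ω | h n ω ∉ W} = ν.restrict A {ω | g n ω ∉ W} := by
  borelize E
  obtain ⟨k, h, hk, k_law, h_eq⟩ := exists_signed_coupling hA hc g
  refine ⟨h, fun a => ?_, fun W hW W_zero W_symm n => ?_⟩
  · have norm_measurable : Measurable fun u : ℕ → E => ‖Finsupp.linearCombination ℝ u a‖ := by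
      simp only [Finsupp.linearCombination_apply, Finsupp.sum]
      fun_prop
    calc ‖Finsupp.linearCombination ℝ h a‖
        = ∫ ω, A.indicator (fun ω => ‖Finsupp.linearCombination ℝ (k ω) a‖) ω ∂ν := by
          rw [norm_linearCombination_eq_integral]
          refine integral_congr_ae ?_
          filter_upwards [h_eq] with ω hω
          by_cases mem : ω ∈ A <;> simp [hω, mem, Finsupp.linearCombination_apply]
      _ = ∫ ω in A, ‖Finsupp.linearCombination ℝ (k ω) a‖ ∂ν := integral_indicator hA
      _ = ∫ p, ‖Finsupp.linearCombination ℝ (fun i => p.2 i • g i p.1) a‖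
            ∂(ν.restrict A).prod signLaw := (k_law.comp norm_measurable).integral_eq
      _ = ∫ ω in A, signNorm a (fun i => g i ω) ∂ν :=
          integral_prod _ (integrable_prod_linearCombination
            (fun n => (L1.integrable_coeFn (g n)).restrict) a).norm
  · have W_measurable : MeasurableSet {u : ℕ → E | u n ∉ W} :=
      hW.measurableSet.compl.preimage (measurable_pi_apply n)
    calc ν {ω | h n ω ∉ W}
        = ν (k ⁻¹' {u | u n ∉ W} ∩ A) := by
          refine measure_congr ?_
          filter_upwards [h_eq] with ω hω
          refine propext ?_
          change h n ω ∉ W ↔ k ω n ∉ W ∧ ω ∈ A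
          by_cases mem : ω ∈ A <;> simp [hω, mem, W_zero]
      _ = (ν.restrict A).prod signLaw {p | p.2 n • g n p.1 ∉ W} := by
          rw [← Measure.restrict_apply (hk W_measurable)]
          exact k_law.measure_mem_eq W_measurable
      _ = ν.restrict A {ω | g n ω ∉ W} := prod_signLaw_smul_notMem W_symm n

theorem norm_linearCombination_coe {M : Submodule ℝ E} (u : ℕ → M) (a : ℕ →₀ ℝ) :
    ‖Finsupp.linearCombination ℝ (fun i => (u i : E)) a‖ = ‖Finsupp.linearCombination ℝ u a‖ := by
  change _ = ‖M.subtype (Finsupp.linearCombination ℝ u a)‖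
  rw [Finsupp.apply_linearCombination]
  rfl

theorem signNorm_coe {M : Submodule ℝ E} (a : ℕ →₀ ℝ) (u : ℕ → M) :
    signNorm a (fun i => (u i : E)) = signNorm a u :=
  integral_congr_ae (Eventually.of_forall fun s => norm_linearCombination_coe (s • u) a)

theorem exists_signed_copy [CompleteSpace E] [IsFiniteMeasure ν] {A : Set S}
    (hA : MeasurableSet A) {c : S → ℕ → Bool} (hc : Measurable c)
    [NullSingletonClass ((ν.restrict A).map c)] (g : ℕ → Lp E 1 ν) :
    ∃ h : ℕ → Lp E 1 ν,
      (∀ a, ‖Finsupp.linearCombination ℝ h a‖ = ∫ ω in A, signNorm a (fun i => g i ω) ∂ν) ∧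
      ∀ W : Set E, IsClosed W → 0 ∈ W → (∀ y ∈ W, -y ∈ W) →
        ∀ n, ν {ω | h n ω ∉ W} = ν.restrict A {ω | g n ω ∉ W} := by
  obtain ⟨M, M_closed, M_secondCountable, hM⟩ :=
    exists_closed_submodule_forall_mem fun n => Lp.stronglyMeasurable (g n)
  have : CompleteSpace M := M_closed.completeSpace_coe
  choose g' hg' using fun n => exists_compLpL_subtypeL_eq (hM n)
  obtain ⟨h', h'_norm, h'_law⟩ := exists_signed_copy_of_secondCountable hA hc g'
  have compLpL_eq (f : Lp M 1 ν) : ∀ᵐ ω ∂ν, M.subtypeL.compLpL 1 ν f ω = f ω :=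
    M.subtypeL.coeFn_compLpL f
  have g_eq : ∀ᵐ ω ∂ν, ∀ n, g n ω = g' n ω := ae_all_iff.2 fun n => hg' n ▸ compLpL_eq (g' n)
  refine ⟨fun n => M.subtypeL.compLpL 1 ν (h' n), fun a => ?_, fun W hW W_zero W_symm n => ?_⟩
  · calc ‖Finsupp.linearCombination ℝ (fun n => M.subtypeL.compLpL 1 ν (h' n)) a‖
        = ‖Finsupp.linearCombination ℝ h' a‖ := by
          simp only [norm_linearCombination_eq_integral]
          refine integral_congr_ae ?_
          filter_upwards [ae_all_iff.2 fun n => compLpL_eq (h' n)] with ω hω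
          simp only [hω, norm_linearCombination_coe]
      _ = ∫ ω in A, signNorm a (fun i => g' i ω) ∂ν := h'_norm a
      _ = ∫ ω in A, signNorm a (fun i => g i ω) ∂ν := by
          refine integral_congr_ae (ae_restrict_of_ae ?_)
          filter_upwards [g_eq] with ω hω
          simp only [hω, signNorm_coe]
  · calc ν {ω | M.subtypeL.compLpL 1 ν (h' n) ω ∉ W}
        = ν {ω | h' n ω ∉ ((↑) ⁻¹' W : Set M)} := by
          refine measure_congr ?_
          filter_upwards [compLpL_eq (h' n)] with ω hω
          exact congrArg (· ∉ W) hω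
      _ = ν.restrict A {ω | g' n ω ∉ ((↑) ⁻¹' W : Set M)} :=
          h'_law _ (hW.preimage continuous_subtype_val) W_zero (fun y => W_symm y) n
      _ = ν.restrict A {ω | g n ω ∉ W} := by
          refine measure_congr (ae_restrict_of_ae ?_)
          filter_upwards [g_eq] with ω hω
          exact congrArg (· ∉ W) (hω n).symm

end SignedCopies

section Truncation

variable {S E ι κ : Type*} [MeasurableSpace S] {ν : Measure S} [NormedAddCommGroup E]

/-- Truncation at height `C`: the identity on the closed ball of radius `C`, zero outside it. -/
def ballTrunc (C : ℝ) (y : E) : E := (Metric.closedBall 0 C).indicator id y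

theorem ballTrunc_of_norm_le {C : ℝ} {y : E} (hy : ‖y‖ ≤ C) : ballTrunc C y = y :=
  indicator_of_mem (mem_closedBall_zero_iff.2 hy) _

theorem norm_ballTrunc_le (C : ℝ) (y : E) : ‖ballTrunc C y‖ ≤ |C| := by
  by_cases hy : ‖y‖ ≤ C
  · rw [ballTrunc_of_norm_le hy]
    exact hy.trans (le_abs_self C)
  · rw [ballTrunc, indicator_of_notMem (mem_closedBall_zero_iff.not.2 hy), norm_zero]
    exact abs_nonneg C

/-- The truncation at height `C` of an element of `L¹`. -/
def truncation (C : ℝ) (f : Lp E 1 ν) : Lp E 1 ν :=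
  ((Lp.memLp f).indicator
    ((Lp.stronglyMeasurable f).norm.measurable (measurableSet_Iic (a := C)))).toLp

theorem coeFn_truncation (C : ℝ) (f : Lp E 1 ν) :
    truncation C f =ᵐ[ν] fun s => ballTrunc C (f s) := by
  refine (MemLp.coeFn_toLp _).trans (Eventually.of_forall fun s => ?_)
  beta_reduce
  by_cases hs : ‖f s‖ ≤ C
  · rw [indicator_of_mem (by exact hs), ballTrunc_of_norm_le hs]
  · rw [indicator_of_notMem (by exact hs), ballTrunc,
      indicator_of_notMem (mem_closedBall_zero_iff.not.2 hs)]

theorem ae_norm_truncation_le (C : ℝ) (f : Lp E 1 ν) : ∀ᵐ s ∂ν, ‖truncation C f s‖ ≤ |C| := by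
  filter_upwards [coeFn_truncation C f] with s hs
  exact hs ▸ norm_ballTrunc_le C (f s)

variable [NormedSpace ℝ E]

theorem IsWeaklyCompact.neg {W : Set E} (hW : IsWeaklyCompact W) : IsWeaklyCompact (-W) := by
  have neg_image : toWeakSpace ℝ E '' (-W) = -(toWeakSpace ℝ E '' W) := by
    simp only [← image_neg_eq_neg, image_image, map_neg]
  unfold IsWeaklyCompact
  rw [neg_image]
  exact IsCompact.neg hW

theorem IsWeaklyCompact.add {V W : Set E} (hV : IsWeaklyCompact V) (hW : IsWeaklyCompact W) :
    IsWeaklyCompact (V + W) := by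
  unfold IsWeaklyCompact
  rw [image_add]
  exact IsCompact.add hV hW

theorem exists_finset_measure_compl_biUnion_lt [Countable κ] [IsFiniteMeasure ν] {B : κ → Set S}
    (hB : ∀ k, MeasurableSet (B k)) (iUnion_eq : ⋃ k, B k = univ) {ε : ℝ≥0∞} (hε : ε ≠ 0) :
    ∃ T : Finset κ, ν (⋃ k ∈ T, B k)ᶜ < ε := by
  have antitone_compl : Antitone fun T : Finset κ => (⋃ k ∈ T, B k)ᶜ := fun T T' hT =>
    compl_subset_compl.2 (biUnion_subset_biUnion_left hT)
  have iInter_eq : ⋂ T : Finset κ, (⋃ k ∈ T, B k)ᶜ = ∅ := by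
    rw [← compl_iUnion, ← iUnion_eq_iUnion_finset, iUnion_eq, compl_univ]
  have measure_tendsto := tendsto_measure_iInter_atTop (μ := ν) (fun T : Finset κ =>
    (T.measurableSet_biUnion fun k _ => hB k).compl.nullMeasurableSet) antitone_compl
    ⟨∅, measure_ne_top _ _⟩
  rw [iInter_eq, measure_empty] at measure_tendsto
  exact (measure_tendsto.eventually_lt_const (pos_iff_ne_zero.2 hε)).exists

theorem isWeaklyCompact_biUnion_finset {W : ι → Set E} (hW : ∀ i, IsWeaklyCompact (W i))
    (T : Finset ι) : IsWeaklyCompact (⋃ i ∈ T, W i) := by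
  unfold IsWeaklyCompact
  simp only [image_iUnion]
  exact T.isCompact_biUnion fun i _ => hW i

theorem IsRelWeaklyCompact.exists_isWeaklyCompact {W : Set E} (hW : IsRelWeaklyCompact W) :
    ∃ V, IsWeaklyCompact V ∧ W ⊆ V := by
  refine ⟨toWeakSpace ℝ E ⁻¹' closure (toWeakSpace ℝ E '' W), ?_, fun x hx =>
    subset_closure (X := WeakSpace ℝ E) (mem_image_of_mem _ hx)⟩
  unfold IsWeaklyCompact
  rwa [image_preimage_eq _ (toWeakSpace ℝ E).surjective]

namespace WeaklyTight

variable {f g : ι → S → E}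

theorem comp (hf : WeaklyTight ν f) (σ : κ → ι) : WeaklyTight ν (f ∘ σ) := fun ε hε =>
  let ⟨W, hW, W_le⟩ := hf ε hε
  ⟨W, hW, fun k => W_le (σ k)⟩

theorem congr_ae (hf : WeaklyTight ν f) (hfg : ∀ i, f i =ᵐ[ν] g i) : WeaklyTight ν g :=
  fun ε hε => by
  obtain ⟨W, hW, W_le⟩ := hf ε hε
  refine ⟨W, hW, fun i => (measure_congr ?_).trans_le (W_le i)⟩
  filter_upwards [hfg i] with s hs
  exact congrArg (· ∉ W) hs.symm

theorem add (hf : WeaklyTight ν f) (hg : WeaklyTight ν g) : WeaklyTight ν (f + g) :=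
  fun ε hε => by
  obtain ⟨V, hV, V_le⟩ := hf (ε / 2) (ENNReal.half_pos hε).ne'
  obtain ⟨W, hW, W_le⟩ := hg (ε / 2) (ENNReal.half_pos hε).ne'
  refine ⟨V + W, hV.add hW, fun i => ?_⟩
  have bad_subset : {s | (f + g) i s ∉ V + W} ⊆ {s | f i s ∉ V} ∪ {s | g i s ∉ W} := by
    intro s hs
    by_contra! h
    simp only [mem_union, mem_ofPred_eq, not_or, not_not] at h
    exact hs (add_mem_add h.1 h.2)
  calc ν {s | (f + g) i s ∉ V + W}
      ≤ ν {s | f i s ∉ V} + ν {s | g i s ∉ W} :=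
        (measure_mono bad_subset).trans (measure_union_le _ _)
    _ ≤ ε / 2 + ε / 2 := add_le_add (V_le i) (W_le i)
    _ = ε := ENNReal.add_halves ε

theorem ballTrunc_comp (hf : WeaklyTight ν f) (C : ℝ) :
    WeaklyTight ν fun i s => ballTrunc C (f i s) := fun ε hε => by
  obtain ⟨W, hW, W_le⟩ := hf ε hε
  refine ⟨W ∪ {0}, hW.union (isWeaklyCompact_singleton 0), fun i =>
    (measure_mono ?_).trans (W_le i)⟩
  refine fun s (bad : ballTrunc C (f i s) ∉ _) mem => bad ?_
  by_cases hC : f i s ∈ Metric.closedBall 0 C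
  · rw [ballTrunc, indicator_of_mem hC]
    exact Or.inl mem
  · rw [ballTrunc, indicator_of_notMem hC]
    exact Or.inr rfl

theorem of_truncation {f : ι → Lp E 1 ν} {M : ℝ} (f_le : ∀ i, ‖f i‖ ≤ M)
    (hf : ∀ C, WeaklyTight ν fun i => truncation C (f i)) : WeaklyTight ν fun i => f i :=
  fun ε hε => by
  obtain ⟨n, n_pos, M_lt⟩ :=
    ENNReal.exists_nat_pos_mul_gt (ENNReal.half_pos hε).ne' (ENNReal.ofReal_ne_top (r := M))
  obtain ⟨W, hW, W_le⟩ := hf n (ε / 2) (ENNReal.half_pos hε).ne'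
  refine ⟨W, hW, fun i => ?_⟩
  have bad_le : ν {s | f i s ∉ W} ≤
      ν ({s | (n : ℝ≥0∞) ≤ ‖f i s‖ₑ} ∪ {s | truncation n (f i) s ∉ W}) := by
    refine measure_mono_ae ?_
    filter_upwards [coeFn_truncation n (f i)] with s hs bad
    refine or_iff_not_imp_left.2 fun small mem => bad ?_
    have norm_le : ‖f i s‖ ≤ n := by
      rw [mem_ofPred_eq, not_le, ← ofReal_norm, ← ENNReal.ofReal_natCast] at small
      exact (ENNReal.ofReal_le_ofReal_iff n.cast_nonneg).1 small.le
    rwa [hs, ballTrunc_of_norm_le norm_le] at mem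
  have large_le : ν {s | (n : ℝ≥0∞) ≤ ‖f i s‖ₑ} ≤ ε / 2 :=
    calc ν {s | (n : ℝ≥0∞) ≤ ‖f i s‖ₑ}
        ≤ (∫⁻ s, ‖f i s‖ₑ ∂ν) / n := meas_ge_le_lintegral_div (Lp.aestronglyMeasurable (f i)).enorm
          (Nat.cast_ne_zero.2 n_pos.ne') (ENNReal.natCast_ne_top n)
      _ ≤ ENNReal.ofReal M / n := by
          rw [← L1.ofReal_norm_eq_lintegral]
          gcongr
          exact f_le i
      _ ≤ ε / 2 := ENNReal.div_le_of_le_mul' M_lt.le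
  calc ν {s | f i s ∉ W}
      ≤ ν {s | (n : ℝ≥0∞) ≤ ‖f i s‖ₑ} + ν {s | truncation n (f i) s ∉ W} :=
        bad_le.trans (measure_union_le _ _)
    _ ≤ ε / 2 + ε / 2 := add_le_add large_le (W_le i)
    _ = ε := ENNReal.add_halves ε

theorem of_restrict [Countable κ] [IsFiniteMeasure ν] {B : κ → Set S}
    (hB : ∀ k, MeasurableSet (B k)) (iUnion_eq : ⋃ k, B k = univ)
    (hf : ∀ k, WeaklyTight (ν.restrict (B k)) f) : WeaklyTight ν f := fun ε hε => by
  obtain ⟨T, hT⟩ := exists_finset_measure_compl_biUnion_lt (ν := ν) hB iUnion_eq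
    (ENNReal.half_pos hε).ne'
  choose W hW W_le using fun k => hf k (ε / 2 / T.card)
    (ENNReal.div_pos (ENNReal.half_pos hε).ne' (ENNReal.natCast_ne_top _)).ne'
  refine ⟨⋃ k ∈ T, W k, isWeaklyCompact_biUnion_finset hW T, fun i => ?_⟩
  have bad_subset : {s | f i s ∉ ⋃ k ∈ T, W k} ⊆
      (⋃ k ∈ T, B k)ᶜ ∪ ⋃ k ∈ T, {s | f i s ∉ W k} ∩ B k := by
    intro s hs
    by_cases mem : s ∈ ⋃ k ∈ T, B k
    · simp only [mem_ofPred_eq, mem_iUnion, exists_prop, not_exists, not_and] at hs mem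
      obtain ⟨k, hk, mem⟩ := mem
      exact Or.inr (mem_biUnion hk ⟨hs k hk, mem⟩)
    · exact Or.inl mem
  calc ν {s | f i s ∉ ⋃ k ∈ T, W k}
      ≤ ν (⋃ k ∈ T, B k)ᶜ + ∑ k ∈ T, ν ({s | f i s ∉ W k} ∩ B k) :=
        (measure_mono bad_subset).trans ((measure_union_le _ _).trans
          (by gcongr; exact measure_biUnion_finset_le _ _))
    _ ≤ ε / 2 + ∑ k ∈ T, ε / 2 / T.card := by
        gcongr with k
        rw [← Measure.restrict_apply' (hB k)]
        exact W_le k i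
    _ ≤ ε / 2 + ε / 2 := by
        rw [Finset.sum_const, nsmul_eq_mul]
        gcongr
        exact ENNReal.mul_div_le
    _ = ε := ENNReal.add_halves ε

end WeaklyTight

theorem isDeltaSSet_iff [IsProbabilityMeasure ν] {K : Set (Lp E 1 ν)} :
    IsDeltaSSet ν K ↔ UnifIntegrableSet ν K ∧ WeaklyTight ν fun f : K => (f : Lp E 1 ν) := by
  refine and_congr_right fun _ => ⟨fun h ε hε => ?_, fun h δ hδ => ?_⟩
  · obtain ⟨δ, δ_pos, δ_le⟩ : ∃ δ : ℝ, 0 < δ ∧ ENNReal.ofReal δ ≤ ε := by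
      obtain ⟨δ, -, δ_pos, δ_lt⟩ := ENNReal.lt_iff_exists_real_btwn.1 (pos_iff_ne_zero.2 hε)
      exact ⟨δ, ENNReal.ofReal_pos.1 δ_pos, δ_lt.le⟩
    obtain ⟨W, hW, le_W⟩ := h δ δ_pos
    refine ⟨W, hW, fun f => le_trans ?_ δ_le⟩
    change ν ((f : Lp E 1 ν) ⁻¹' W)ᶜ ≤ _
    rw [prob_compl_eq_one_sub (measurableSet_preimage_of_isWeaklyCompact hW _)]
    exact tsub_le_iff_tsub_le.1 (le_W f f.2)
  · obtain ⟨W, hW, W_le⟩ := h (ENNReal.ofReal δ) (ENNReal.ofReal_pos.2 hδ).ne'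
    refine ⟨W, hW, fun f hf => ?_⟩
    rw [← compl_compl ((f : S → E) ⁻¹' W),
      prob_compl_eq_one_sub (measurableSet_preimage_of_isWeaklyCompact hW f).compl]
    exact tsub_le_tsub_left (W_le ⟨f, hf⟩) 1

end Truncation

section BoundedSets

variable {S E : Type*} [MeasurableSpace S] {ν : Measure S} [NormedAddCommGroup E] [NormedSpace ℝ E]

/-- Every uniformly bounded relatively weakly compact subset of `L¹(ν, E)` is weakly tight: over a
probability space this says that all those sets are δS-sets. -/
def BoundedSetsWeaklyTight (ν : Measure S) (E : Type*) [NormedAddCommGroup E] [NormedSpace ℝ E] :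
    Prop :=
  ∀ K : Set (Lp E 1 ν), (∃ C : ℝ, ∀ f ∈ K, ∀ᵐ s ∂ν, ‖f s‖ ≤ C) → IsRelWeaklyCompact K →
    WeaklyTight ν fun f : K => (f : Lp E 1 ν)

theorem ae_eq_setAverage_of_atom [CompleteSpace E] [IsFiniteMeasure ν] {B : Set S}
    (hB : MeasurableSet B) (atom : ∀ D, MeasurableSet D → ν (B ∩ D) = 0 ∨ ν (B \ D) = 0)
    (f : Lp E 1 ν) : ∀ᵐ s ∂ν.restrict B, f s = ⨍ t in B, f t ∂ν := by
  borelize E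
  have := (Lp.stronglyMeasurable f).isSeparable_range.secondCountableTopology
  have : HasCountableSeparatingOn E IsOpen (range f) :=
    .of_subtype fun U hU => isOpen_induced_iff.1 hU
  obtain ⟨c, hc⟩ := exists_eventuallyEq_const_of_eventually_mem_of_forall_separating
    (l := ae (ν.restrict B)) IsOpen (Eventually.of_forall fun s => mem_range_self (f := f) s)
    fun U hU => by
      have U_measurable : MeasurableSet (f ⁻¹' U) :=
        (Lp.stronglyMeasurable f).measurable hU.measurableSet
      simp only [ae_iff, Measure.restrict_apply' hB]
      refine (atom _ U_measurable).symm.imp (fun h => ?_) fun h => ?_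
      · rwa [inter_comm]
      · simp only [not_not]
        rwa [inter_comm]
  rcases eq_or_ne (ν B) 0 with null | pos
  · simp [Measure.restrict_eq_zero.2 null]
  · have average_eq : ⨍ t in B, f t ∂ν = c := by
      rw [average_congr hc]
      exact setAverage_const pos (measure_ne_top ν B) c
    rwa [average_eq]

theorem exists_clm_setAverage [CompleteSpace E] (ν : Measure S) (B : Set S) :
    ∃ T : Lp E 1 ν →L[ℝ] E, ∀ f, T f = ⨍ s in B, f s ∂ν := by
  refine ⟨(ν.real B)⁻¹ • (L1.integralCLM (E := E) (μ := ν.restrict B)).comp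
    (LpToLpRestrictCLM S E ℝ ν 1 B), fun f => ?_⟩
  rw [setAverage_eq, ← integral_congr_ae (LpToLpRestrictCLM_coeFn ℝ B f),
    ← L1.integral_eq_integral, L1.integral_eq]
  rfl

theorem WeakTendsto.weaklyTight_restrict_atom [CompleteSpace E] [IsFiniteMeasure ν] {B : Set S}
    (hB : MeasurableSet B) (atom : ∀ D, MeasurableSet D → ν (B ∩ D) = 0 ∨ ν (B \ D) = 0)
    {f : ℕ → Lp E 1 ν} {x : Lp E 1 ν} (hf : WeakTendsto f atTop x) :
    WeaklyTight (ν.restrict B) fun n => f n := fun ε _ => by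
  obtain ⟨T, T_eq⟩ := exists_clm_setAverage (E := E) ν B
  obtain ⟨W, hW, W_mem⟩ := (isRelWeaklyCompact_range (hf.map T)).exists_isWeaklyCompact
  have f_mem (n : ℕ) : ∀ᵐ s ∂ν.restrict B, f n s ∈ W := by
    filter_upwards [ae_eq_setAverage_of_atom hB atom (f n)] with s hs
    rw [hs, ← T_eq]
    exact W_mem (mem_range_self n)
  exact ⟨W, hW, fun n => (ae_iff.1 (f_mem n)).trans_le zero_le⟩

theorem WeakTendsto.of_signed_copy [IsFiniteMeasure ν] {f h : ℕ → Lp E 1 ν}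
    (hf : WeakTendsto f atTop 0) {A : Set S} (C : ℝ)
    (h_norm : ∀ a, ‖Finsupp.linearCombination ℝ h a‖ =
      ∫ s in A, signNorm a (fun i => truncation C (f i) s) ∂ν) : WeakTendsto h atTop 0 := by
  refine weakTendsto_of_norm_le_signNorm hf fun a => ?_
  have signNorm_truncation_le : ∀ᵐ s ∂ν,
      signNorm a (fun i => truncation C (f i) s) ≤ signNorm a fun i => f i s := by
    filter_upwards [ae_all_iff.2 fun i => coeFn_truncation C (f i)] with s hs
    simp only [hs]
    exact signNorm_indicator_le a (fun i => f i s) {i | f i s ∈ Metric.closedBall 0 C}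
  have signNorm_integrable (g : ℕ → Lp E 1 ν) := integrable_signNorm (ν := ν)
    (fun i => L1.integrable_coeFn (g i)) a
  calc ‖Finsupp.linearCombination ℝ h a‖
      = ∫ s in A, signNorm a (fun i => truncation C (f i) s) ∂ν := h_norm a
    _ ≤ ∫ s, signNorm a (fun i => truncation C (f i) s) ∂ν :=
        setIntegral_le_integral (signNorm_integrable _)
          (Eventually.of_forall fun s => signNorm_nonneg _ _)
    _ ≤ ∫ s, signNorm a (fun i => f i s) ∂ν :=
        integral_mono_ae (signNorm_integrable _) (signNorm_integrable _) signNorm_truncation_le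
    _ = signNorm a f := (signNorm_eq_integral f a).symm

namespace BoundedSetsWeaklyTight

theorem singleton (H : BoundedSetsWeaklyTight ν E) (x : Lp E 1 ν) :
    WeaklyTight ν fun _ : ℕ => (x : S → E) :=
  .of_truncation (fun _ => le_rfl) fun C =>
    (H {truncation C x} ⟨|C|, by simpa using ae_norm_truncation_le C x⟩
      (IsCompact.closure (isWeaklyCompact_singleton _))).comp
      fun _ => ⟨truncation C x, rfl⟩

variable [CompleteSpace E] [IsFiniteMeasure ν]

theorem truncation_restrict_diffuse (H : BoundedSetsWeaklyTight ν E) {A : Set S}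
    (hA : MeasurableSet A) {c : S → ℕ → Bool} (hc : Measurable c)
    [NullSingletonClass ((ν.restrict A).map c)] {f : ℕ → Lp E 1 ν} (hf : WeakTendsto f atTop 0)
    (C : ℝ) : WeaklyTight (ν.restrict A) fun n => truncation C (f n) := fun ε hε => by
  obtain ⟨h, h_norm, h_law⟩ := exists_signed_copy hA hc fun n => truncation C (f n)
  have h_le (n : ℕ) : ∀ᵐ s ∂ν, ‖h n s‖ ≤ |C| := by
    have h_outside : ν {s | h n s ∉ Metric.closedBall 0 |C|} = 0 := by
      rw [h_law _ Metric.isClosed_closedBall (by simp) (fun y => by simp)]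
      refine ae_iff.1 (ae_restrict_of_ae ?_)
      simpa only [mem_closedBall_zero_iff] using ae_norm_truncation_le C (f n)
    simpa only [mem_closedBall_zero_iff] using ae_iff.2 h_outside
  obtain ⟨W, hW, W_le⟩ := H (range h) ⟨|C|, forall_mem_range.2 h_le⟩
    (isRelWeaklyCompact_range (hf.of_signed_copy C h_norm)) ε hε
  have V_weaklyCompact := (hW.union hW.neg).union (isWeaklyCompact_singleton 0)
  refine ⟨W ∪ -W ∪ {0}, V_weaklyCompact, fun n => ?_⟩
  rw [← h_law _ V_weaklyCompact.isClosed (Or.inr rfl)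
    (fun y => by simp only [mem_union, Set.mem_neg, mem_singleton_iff, neg_neg, neg_eq_zero,
      or_comm, imp_self])]
  refine (measure_mono fun s bad mem => ?_).trans (W_le ⟨h n, mem_range_self n⟩)
  exact bad (Or.inl (Or.inl mem))

theorem truncation_of_weakTendsto_zero (H : BoundedSetsWeaklyTight ν E) {f : ℕ → Lp E 1 ν}
    (hf : WeakTendsto f atTop 0) (C : ℝ) : WeaklyTight ν fun n => truncation C (f n) := by
  obtain ⟨F, c, F_measurable, F_atom, hc, diffuse⟩ := exists_atoms_diffuse_decomposition ν
  have F_compl_measurable : MeasurableSet (⋃ n, F n)ᶜ := (MeasurableSet.iUnion F_measurable).compl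
  refine .of_restrict (B := fun k : Option ℕ => k.elim (⋃ n, F n)ᶜ F)
    (Option.forall.2 ⟨F_compl_measurable, F_measurable⟩)
    (by rw [iUnion_option]; exact compl_union_self _)
    (Option.forall.2 ⟨H.truncation_restrict_diffuse F_compl_measurable hc hf C, fun n => ?_⟩)
  exact ((hf.weaklyTight_restrict_atom (F_measurable n) (F_atom n)).ballTrunc_comp C).congr_ae
    fun i => ae_restrict_of_ae (coeFn_truncation C (f i)).symm

theorem of_weakTendsto (H : BoundedSetsWeaklyTight ν E) {f : ℕ → Lp E 1 ν} {x : Lp E 1 ν}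
    (hf : WeakTendsto f atTop x) : WeaklyTight ν fun n => f n := by
  have sub_weakTendsto : WeakTendsto (fun n => f n - x) atTop 0 := WeakTendsto.sub_const_iff.2 hf
  obtain ⟨M, hM⟩ := (isRelWeaklyCompact_range sub_weakTendsto).exists_norm_le
  have sub_tight : WeaklyTight ν fun n => (f n - x : Lp E 1 ν) :=
    .of_truncation (fun n => hM _ (mem_range_self n))
      (H.truncation_of_weakTendsto_zero sub_weakTendsto)
  refine (sub_tight.add (H.singleton x)).congr_ae fun n => ?_
  filter_upwards [Lp.coeFn_sub (f n) x] with s hs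
  simp only [Pi.add_apply, hs, Pi.sub_apply, sub_add_cancel]

theorem isRelWeaklyCompact_image_truncation (H : BoundedSetsWeaklyTight ν E) {K : Set (Lp E 1 ν)}
    (hK : IsRelWeaklyCompact K) (C : ℝ) : IsRelWeaklyCompact (truncation C '' K) := by
  refine isRelWeaklyCompact_of_seq ⟨|C| * ν.real univ, ?_⟩ fun a ha => ?_
  · rintro _ ⟨f, -, rfl⟩
    exact norm_le_of_ae_norm_le_indicator .univ (by simpa using ae_norm_truncation_le C f)
  · choose f f_mem f_eq using ha
    obtain ⟨x, ψ, ψ_mono, hx⟩ := hK.exists_subseq f_mem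
    obtain ⟨g, hg⟩ := (((H.of_weakTendsto hx).ballTrunc_comp C).congr_ae fun n =>
      (coeFn_truncation C _).symm).exists_weakTendsto
      (fun n => ae_norm_truncation_le C _) (hyperfilter ℕ)
    refine ⟨g, map ψ (hyperfilter ℕ), inferInstance,
      ψ_mono.tendsto_atTop.mono_left Nat.hyperfilter_le_atTop, fun φ => tendsto_map'_iff.2 ?_⟩
    simpa only [Function.comp_def, ← f_eq] using hg φ

theorem weaklyTight (H : BoundedSetsWeaklyTight ν E) {K : Set (Lp E 1 ν)}
    (hK : IsRelWeaklyCompact K) : WeaklyTight ν fun f : K => (f : Lp E 1 ν) := by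
  obtain ⟨M, hM⟩ := hK.exists_norm_le
  refine .of_truncation (fun f => hM f f.2) fun C => ?_
  exact (H (truncation C '' K) ⟨|C|, forall_mem_image.2 fun f _ => ae_norm_truncation_le C f⟩
    (H.isRelWeaklyCompact_image_truncation hK C)).comp fun f => ⟨_, mem_image_of_mem _ f.2⟩

end BoundedSetsWeaklyTight

end BoundedSets

/-- `X` has property (δSμ) iff every uniformly bounded relatively weakly compact subset of
`L¹(μ,X)` is a δS-set. -/
theorem deltaSProp_iff_uniformlyBounded (μ : Measure Ω) [IsProbabilityMeasure μ]
    [CompleteSpace X] :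
    DeltaSProp μ X ↔ ∀ K : Set (Lp X 1 μ),
      (∃ C : ℝ, ∀ f ∈ K, ∀ᵐ ω ∂μ, ‖(f : Ω → X) ω‖ ≤ C) →
      IsRelWeaklyCompact K → IsDeltaSSet μ K := by
  refine ⟨fun h K _ hK => h K hK, fun h K hK => ?_⟩
  have bounded_tight : BoundedSetsWeaklyTight μ X := fun L L_bounded hL =>
    (isDeltaSSet_iff.1 (h L L_bounded hL)).2
  exact isDeltaSSet_iff.2 ⟨hK.unifIntegrableSet, bounded_tight.weaklyTight hK⟩
end
end

section
/- Let E be the Talagrand space on the dyadic tree T and E* its dual, a separable Schur space. Let Ω = Π_{n∈ℕ} {0,1}ⁿ with the product probability μ giving each point of {0,1}ⁿ mass 2^{-n}, P_n: Ω → {0,1}ⁿ the coordinate projections, and f_n(ω) = e*_{P_n(ω)}. Then for every δ > 0 and every weakly compact set W ⊆ E* there exists n ∈ ℕ with μ(f_n⁻¹(W)) < δ; consequently {f_n : n ∈ ℕ} is a relatively weakly compact subset of L¹(μ,E*) that is not a δS-set, and E* fails property (δS_μ). -/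
open MeasureTheory Filter Set ENNReal Pointwise

noncomputable section

variable {Ω : Type*} [MeasurableSpace Ω] {X : Type*} [NormedAddCommGroup X] [NormedSpace ℝ X]

/-- The dyadic tree `T = ⋃ₙ {0,1}ⁿ`: nonempty finite sequences of `0`s and `1`s. -/
def DyadicTree : Type := {l : List Bool // l ≠ []}

/-- `τ ⪰ σ` iff `τ` extends `σ`. -/
def DyadicTree.Ext (σ τ : DyadicTree) : Prop := σ.1 <+: τ.1

/-- The element of the dyadic tree determined by a point of `{0,1}ⁿ⁺¹`. -/
def node {n : ℕ} (v : Fin (n + 1) → Bool) : DyadicTree :=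
  ⟨List.ofFn v, by
    intro h
    have := congrArg List.length h
    simp at this⟩

/-!
If infinitely many `e*_σ` lay in a weakly compact set, the nodes `σ` would contain a comb `u`, with
nodes of increasing length hanging off one branch. Its nodes have at most two restrictions to each
level, so the partial sums of `∑ e_{u k}` are bounded; the `e*_{u k}` have limit `1` along them and
therefore do not accumulate weakly at `0`, although they are weak* null. Hence a weakly compact `W`
contains only finitely many `e*_σ`, and `f_n⁻¹(W)` is even empty for large `n`.

On the other hand, `N` nodes with distinct restrictions to some level give `‖∑ e*_σ‖ ≤ √N`. Two of
the random nodes `P_i(ω)`, `i ≥ m`, agree in their first `m + 1` entries with probability at most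
`2^{-(m+1)}`, so a sum of `N` late functions `f_i` has `L¹` norm at most `√N + N³ 2^{-(m+1)}`. As
`√N` is small compared with `N`, this makes `f_n` weakly null.
-/

open ProbabilityTheory Topology

namespace DyadicTree

lemma finite_setOf_length_le (n : ℕ) : {σ : DyadicTree | σ.1.length ≤ n}.Finite :=
  (List.finite_length_le Bool n).preimage Subtype.val_injective.injOn

instance finite_level (n : ℕ) : Finite {σ : DyadicTree // σ.1.length = n} :=
  ((finite_setOf_length_le n).subset fun _ => le_of_eq).to_subtype

/-- The nodes of level `n` having an extension in `S`, encoded as lists so that `n = 0` needs no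
special treatment. -/
def restrictions (S : Finset DyadicTree) (n : ℕ) : Finset (List Bool) :=
  {σ ∈ S | n ≤ σ.1.length}.image (·.1.take n)

lemma mem_restrictions {S : Finset DyadicTree} {σ τ : DyadicTree} (hτ : τ ∈ S) (h : σ.Ext τ) :
    σ.1 ∈ restrictions S σ.1.length :=
  Finset.mem_image.2 ⟨τ, Finset.mem_filter.2 ⟨hτ, h.length_le⟩, (List.prefix_iff_eq_take.1 h).symm⟩

lemma card_restrictions_le (S : Finset DyadicTree) (n : ℕ) : (restrictions S n).card ≤ S.card :=
  Finset.card_image_le.trans (Finset.card_filter_le _ _)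

lemma restrictions_mono {S S' : Finset DyadicTree} (h : S ⊆ S') (n : ℕ) :
    restrictions S n ⊆ restrictions S' n :=
  Finset.image_subset_image (Finset.filter_subset_filter _ h)

/-- The restriction of a node to a lower level. -/
def restrict (n : ℕ) (τ : DyadicTree) (h : n + 1 ≤ τ.1.length) :
    {σ : DyadicTree // σ.1.length = n + 1} :=
  have hlen : (τ.1.take (n + 1)).length = n + 1 := by simpa using h
  ⟨⟨τ.1.take (n + 1), List.ne_nil_of_length_eq_add_one hlen⟩, hlen⟩

lemma ext_restrict {n : ℕ} {τ : DyadicTree} (h : n + 1 ≤ τ.1.length) : (restrict n τ h).1.Ext τ :=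
  List.take_prefix _ _

/-! ### Combs -/

lemma exists_forall_eventually_take_eq (U : Ultrafilter DyadicTree) :
    ∃ p : ℕ → List Bool, ∀ n, ∀ᶠ σ : DyadicTree in U, σ.1.take n = p n := by
  suffices h : ∀ n, ∃ l : List Bool, ∀ᶠ σ : DyadicTree in U, σ.1.take n = l from
    ⟨fun n => (h n).choose, fun n => (h n).choose_spec⟩
  intro n
  obtain ⟨l, -, hl⟩ := (U.map fun σ : DyadicTree => σ.1.take n).eq_pure_of_finite_mem
    (List.finite_length_le Bool n)
    (Ultrafilter.mem_map.2 (univ_mem' fun σ : DyadicTree => List.length_take_le n σ.1))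
  have hmem : {l} ∈ U.map fun σ : DyadicTree => σ.1.take n := by rw [hl]; exact mem_pure.2 rfl
  exact ⟨l, hmem⟩

/-- An infinite set of nodes contains a comb: nodes hanging off a single branch `p`. -/
lemma exists_comb {A : Set DyadicTree} (hA : A.Infinite) :
    ∃ (p : ℕ → List Bool) (u : ℕ → DyadicTree), (∀ k, u k ∈ A) ∧ ∀ i j, i < j →
      (u i).1.length < (u j).1.length ∧ ∀ n ≤ (u i).1.length, (u j).1.take n = p n := by
  have := cofinite_inf_principal_neBot_iff.2 hA
  let U := Ultrafilter.of (cofinite ⊓ 𝓟 A)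
  have hU : ↑U ≤ cofinite ⊓ 𝓟 A := Ultrafilter.of_le _
  obtain ⟨p, hp⟩ := exists_forall_eventually_take_eq U
  have hnext : ∀ σ : DyadicTree, ∀ᶠ τ : DyadicTree in U,
      σ.1.length < τ.1.length ∧ ∀ n ≤ σ.1.length, τ.1.take n = p n := fun σ => by
    have hlong : ∀ᶠ τ : DyadicTree in U, σ.1.length < τ.1.length := by
      filter_upwards [hU (mem_inf_of_left (finite_setOf_length_le σ.1.length).compl_mem_cofinite)]
        with τ hτ using not_le.1 hτ
    exact hlong.and ((Set.finite_Iic σ.1.length).eventually_all.2 fun n _ => hp n)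
  have hUA : ∀ᶠ τ : DyadicTree in U, τ ∈ A := hU (mem_inf_of_right (mem_principal_self A))
  obtain ⟨u, huA, hu⟩ := exists_seq_of_forall_finset_exists (· ∈ A)
    (fun σ τ : DyadicTree => σ.1.length < τ.1.length ∧ ∀ n ≤ σ.1.length, τ.1.take n = p n)
    fun s _ => (hUA.and (s.finite_toSet.eventually_all.2 fun σ _ => hnext σ)).exists
  exact ⟨p, u, huA, hu⟩

lemma exists_embedding_card_restrictions_le_two {A : Set DyadicTree} (hA : A.Infinite) :
    ∃ u : ℕ ↪ DyadicTree, (∀ k, u k ∈ A) ∧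
      ∀ N n, (restrictions ((Finset.range N).map u) n).card ≤ 2 := by
  obtain ⟨p, u, huA, hu⟩ := exists_comb hA
  have hlen : StrictMono fun k => (u k).1.length := fun i j hij => (hu i j hij).1
  have hinj : Function.Injective u :=
    .of_comp (f := fun σ : DyadicTree => σ.1.length) hlen.injective
  refine ⟨⟨u, hinj⟩, huA, fun N n => ?_⟩
  obtain ⟨k, hk, hmin⟩ : ∃ k, n ≤ (u k).1.length ∧ ∀ j, n ≤ (u j).1.length → k ≤ j :=
    have h : ∃ k, n ≤ (u k).1.length := ⟨n, hlen.le_apply⟩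
    ⟨Nat.find h, Nat.find_spec h, fun _ => Nat.find_min' h⟩
  suffices restrictions ((Finset.range N).map ⟨u, hinj⟩) n ⊆ {(u k).1.take n, p n} from
    (Finset.card_le_card this).trans Finset.card_le_two
  intro l hl
  simp only [restrictions, Finset.mem_image, Finset.mem_filter, Finset.mem_map] at hl
  obtain ⟨_, ⟨⟨j, -, rfl⟩, hj⟩, rfl⟩ := hl
  rw [Finset.mem_insert, Finset.mem_singleton]
  rcases (hmin j hj).eq_or_lt with rfl | hkj
  · exact .inl rfl
  · exact .inr ((hu k j hkj).2 n hk)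

end DyadicTree

/-! ### Talagrand's norm -/

/-- The supremum of `|a|` over the extensions of `σ`, an ingredient of Talagrand's norm. -/
def levelSup (a : DyadicTree →₀ ℝ) (σ : DyadicTree) : ℝ :=
  sSup {r : ℝ | ∃ τ : DyadicTree, σ.Ext τ ∧ r = |a τ|}

/-- The contribution of the nodes of length `n` to Talagrand's norm. -/
def levelNorm (a : DyadicTree →₀ ℝ) (n : ℕ) : ℝ :=
  Real.sqrt (∑' σ : {σ : DyadicTree // σ.1.length = n}, levelSup a σ.1 ^ 2)

/-- Talagrand's norm on finitely supported functions; the nodes of the tree have positive length,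
hence the shift by one. -/
def treeNorm (a : DyadicTree →₀ ℝ) : ℝ :=
  ⨆ n : ℕ, levelNorm a (n + 1)

section TreeNorm

variable {a : DyadicTree →₀ ℝ}

lemma levelSup_le {σ : DyadicTree} {c : ℝ} (h : ∀ τ, σ.Ext τ → |a τ| ≤ c) : levelSup a σ ≤ c :=
  csSup_le ⟨_, σ, List.prefix_refl _, rfl⟩ (by rintro _ ⟨τ, hτ, rfl⟩; exact h τ hτ)

lemma exists_forall_abs_le {α : Type*} (a : α →₀ ℝ) : ∃ M, ∀ x, |a x| ≤ M := by
  obtain ⟨M, hM⟩ := (a.finite_range.image abs).bddAbove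
  exact ⟨M, fun x => hM ⟨a x, ⟨x, rfl⟩, rfl⟩⟩

lemma abs_le_levelSup (a : DyadicTree →₀ ℝ) {σ τ : DyadicTree} (h : σ.Ext τ) :
    |a τ| ≤ levelSup a σ := by
  obtain ⟨M, hM⟩ := exists_forall_abs_le a
  exact le_csSup ⟨M, by rintro _ ⟨ρ, -, rfl⟩; exact hM ρ⟩ ⟨τ, h, rfl⟩

lemma levelSup_nonneg (a : DyadicTree →₀ ℝ) (σ : DyadicTree) : 0 ≤ levelSup a σ :=
  (abs_nonneg _).trans (abs_le_levelSup a (List.prefix_refl σ.1))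

lemma levelSup_eq_zero {σ : DyadicTree}
    (h : σ.1 ∉ DyadicTree.restrictions a.support σ.1.length) : levelSup a σ = 0 := by
  refine (levelSup_le fun τ hτ => ?_).antisymm (levelSup_nonneg a σ)
  have hsupp : τ ∉ a.support := fun hs => h (DyadicTree.mem_restrictions hs hτ)
  rw [Finsupp.notMem_support_iff.1 hsupp, abs_zero]

lemma tsum_levelSup_sq_le {M : ℝ} (hM : ∀ τ, |a τ| ≤ M) (n : ℕ) :
    ∑' σ : {σ : DyadicTree // σ.1.length = n}, levelSup a σ.1 ^ 2 ≤
      (DyadicTree.restrictions a.support n).card * M ^ 2 := by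
  let R := DyadicTree.restrictions a.support n
  have := Fintype.ofFinite {σ : DyadicTree // σ.1.length = n}
  have hcard : (Finset.univ.filter fun σ : {σ : DyadicTree // σ.1.length = n} => σ.1.1 ∈ R).card ≤
      R.card :=
    Finset.card_le_card_of_injOn (·.1.1) (fun σ hσ => (Finset.mem_filter.1 hσ).2)
      (Subtype.val_injective.comp Subtype.val_injective).injOn
  rw [tsum_fintype]
  calc ∑ σ : {σ : DyadicTree // σ.1.length = n}, levelSup a σ.1 ^ 2
      ≤ ∑ σ : {σ : DyadicTree // σ.1.length = n}, if σ.1.1 ∈ R then M ^ 2 else 0 := by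
        refine Finset.sum_le_sum fun ⟨σ, hσ⟩ _ => ?_
        subst hσ
        split_ifs with h
        · exact pow_le_pow_left₀ (levelSup_nonneg a σ) (levelSup_le fun τ _ => hM τ) 2
        · rw [levelSup_eq_zero h, sq, mul_zero]
    _ ≤ R.card * M ^ 2 := by
        rw [← Finset.sum_filter, Finset.sum_const, nsmul_eq_mul]
        gcongr

lemma levelNorm_le {M : ℝ} (hM : ∀ τ, |a τ| ≤ M) {n k : ℕ}
    (hk : (DyadicTree.restrictions a.support n).card ≤ k) : levelNorm a n ≤ Real.sqrt k * M := by
  have hM0 : 0 ≤ M := (abs_nonneg _).trans (hM ⟨[true], List.cons_ne_nil _ _⟩)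
  rw [← Real.sqrt_sq hM0, ← Real.sqrt_mul k.cast_nonneg]
  refine Real.sqrt_le_sqrt ((tsum_levelSup_sq_le hM n).trans ?_)
  gcongr

lemma treeNorm_le {M : ℝ} (hM : ∀ τ, |a τ| ≤ M) {k : ℕ}
    (hk : ∀ n, (DyadicTree.restrictions a.support n).card ≤ k) : treeNorm a ≤ Real.sqrt k * M :=
  ciSup_le fun n => levelNorm_le hM (hk (n + 1))

lemma levelNorm_le_treeNorm (a : DyadicTree →₀ ℝ) (n : ℕ) : levelNorm a (n + 1) ≤ treeNorm a := by
  obtain ⟨M, hM⟩ := exists_forall_abs_le a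
  refine le_ciSup (f := fun n => levelNorm a (n + 1)) ⟨Real.sqrt a.support.card * M, ?_⟩ n
  rintro _ ⟨n, rfl⟩
  exact levelNorm_le hM (DyadicTree.card_restrictions_le a.support (n + 1))

lemma treeNorm_nonneg (a : DyadicTree →₀ ℝ) : 0 ≤ treeNorm a :=
  (Real.sqrt_nonneg _).trans (levelNorm_le_treeNorm a 0)

lemma sum_sq_le_treeNorm_sq (a : DyadicTree →₀ ℝ) {ι : Type*} [Fintype ι] {f : ι → DyadicTree}
    {n : ℕ} (hlen : ∀ i, n + 1 ≤ (f i).1.length)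
    (hinj : Function.Injective fun i => (f i).1.take (n + 1)) :
    ∑ i, a (f i) ^ 2 ≤ treeNorm a ^ 2 := by
  let F : ι → {σ : DyadicTree // σ.1.length = n + 1} := fun i =>
    DyadicTree.restrict n (f i) (hlen i)
  have hF : Function.Injective F := fun i j hij => hinj (congrArg (·.1.1) hij)
  calc ∑ i, a (f i) ^ 2 ≤ ∑ i, levelSup a (F i).1 ^ 2 := by
        refine Finset.sum_le_sum fun i _ => ?_
        rw [← sq_abs]
        gcongr
        exact abs_le_levelSup a (DyadicTree.ext_restrict (hlen i))
    _ = ∑' i, levelSup a (F i).1 ^ 2 := (tsum_fintype _).symm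
    _ ≤ ∑' σ : {σ : DyadicTree // σ.1.length = n + 1}, levelSup a σ.1 ^ 2 :=
        tsum_comp_le_tsum_of_inj (f := fun σ : {σ : DyadicTree // σ.1.length = n + 1} =>
          levelSup a σ.1 ^ 2) .of_finite (fun _ => sq_nonneg _) hF
    _ ≤ treeNorm a ^ 2 := (Real.sqrt_le_iff.1 (levelNorm_le_treeNorm a n)).2

end TreeNorm

/-! ### Weak compactness -/

/-- The functionals with limit `1` along a bounded family form a convex set staying away from `0`
in norm, hence also weakly by Mazur's theorem. -/
lemma zero_notMem_closure_toWeakSpace {ι : Type*} {l : Filter ι} [l.NeBot] {x : ι → X} {C : ℝ}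
    (hx : ∀ i, ‖x i‖ ≤ C) {S : Set (X →L[ℝ] ℝ)}
    (hS : ∀ f ∈ S, Tendsto (fun i => f (x i)) l (𝓝 1)) :
    0 ∉ closure (toWeakSpace ℝ (X →L[ℝ] ℝ) '' S) := by
  let T : Set (X →L[ℝ] ℝ) := {f | Tendsto (fun i => f (x i)) l (𝓝 1)}
  have hTconv : Convex ℝ T := fun f hf g hg a b _ _ hab => by
    simpa [T, hab] using (hf.const_mul a).add (hg.const_mul b)
  have hTnorm : closure T ⊆ {f | 1 ≤ ‖f‖ * C} := by
    refine closure_minimal (fun f hf => le_of_tendsto hf (.of_forall fun i => ?_))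
      (isClosed_le (by fun_prop) (by fun_prop))
    exact (le_abs_self _).trans ((f.le_opNorm _).trans (by gcongr; exact hx i))
  intro h0
  have hmem : 0 ∈ toWeakSpace ℝ (X →L[ℝ] ℝ) '' closure T := by
    rw [hTconv.toWeakSpace_closure ℝ]
    exact closure_mono (Set.image_mono hS) h0
  obtain ⟨f, hf, hf0⟩ := hmem
  obtain rfl := (toWeakSpace ℝ (X →L[ℝ] ℝ)).map_eq_zero_iff.1 hf0
  have hle : 1 ≤ ‖(0 : X →L[ℝ] ℝ)‖ * C := hTnorm hf
  rw [norm_zero, zero_mul] at hle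
  exact zero_lt_one.not_ge hle

lemma IsWeaklyCompact.zero_mem_closure_of_tendsto {W : Set (X →L[ℝ] ℝ)} (hW : IsWeaklyCompact W)
    {f : ℕ → X →L[ℝ] ℝ} (hfW : ∀ k, f k ∈ W) {s : Set X}
    (hs : Dense (Submodule.span ℝ s : Set X))
    (hf : ∀ x ∈ s, Tendsto (fun k => f k x) atTop (𝓝 0)) :
    0 ∈ closure (toWeakSpace ℝ (X →L[ℝ] ℝ) '' Set.range f) := by
  let F := fun k => toWeakSpace ℝ (X →L[ℝ] ℝ) (f k)
  obtain ⟨_, ⟨y, -, rfl⟩, hy⟩ := hW.ultrafilter_le_nhds ((hyperfilter ℕ).map F)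
    (tendsto_principal.2 (.of_forall fun k => ⟨f k, hfW k, rfl⟩))
  have hy0 : y = 0 := ContinuousLinearMap.ext_on hs fun x hx =>
    tendsto_nhds_unique
      (((WeakBilin.eval_continuous (topDualPairing ℝ (X →L[ℝ] ℝ)).flip
        (NormedSpace.inclusionInDoubleDual ℝ X x)).tendsto _).comp hy)
      ((hf x hx).mono_left Nat.hyperfilter_le_atTop)
  rw [hy0, map_zero] at hy
  exact mem_closure_of_tendsto hy (.of_forall fun k => ⟨f k, ⟨k, rfl⟩, rfl⟩)

lemma tendsto_toWeakSpace {ι : Type*} {l : Filter ι} {g : ι → X} {x : X}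
    (h : ∀ φ : X →L[ℝ] ℝ, Tendsto (fun i => φ (g i)) l (𝓝 (φ x))) :
    Tendsto (fun i => toWeakSpace ℝ X (g i)) l (𝓝 (toWeakSpace ℝ X x)) :=
  (WeakBilin.tendsto_iff_forall_eval_tendsto (topDualPairing ℝ X).flip fun _ _ hxy =>
    (SeparatingDual.eq_iff_forall_dual_eq (R := ℝ)).2 (LinearMap.congr_fun hxy)).2 h

lemma isRelWeaklyCompact_range_of_tendsto {g : ℕ → X} {x : X}
    (h : ∀ φ : X →L[ℝ] ℝ, Tendsto (fun n => φ (g n)) atTop (𝓝 (φ x))) :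
    IsRelWeaklyCompact (Set.range g) := by
  refine (tendsto_toWeakSpace h).isCompact_insert_range.closure_of_subset ?_
  rintro _ ⟨_, ⟨n, rfl⟩, rfl⟩
  exact .inr ⟨n, rfl⟩

/-- For arbitrarily small `ε`, sufficiently late blocks of some fixed length have averages of norm
at most `ε`; this is a quantitative sufficient condition for weak nullity. -/
def HasSmallBlockMeans (g : ℕ → X) : Prop :=
  ∀ ε : ℝ, 0 < ε → ∃ N : ℕ, 0 < N ∧ ∃ m : ℕ, ∀ s : Finset ℕ, s.card = N → (∀ i ∈ s, m ≤ i) →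
    ‖∑ i ∈ s, g i‖ ≤ ε * N

namespace HasSmallBlockMeans

lemma map {Y : Type*} [NormedAddCommGroup Y] [NormedSpace ℝ Y] {g : ℕ → X}
    (hg : HasSmallBlockMeans g) (φ : X →L[ℝ] Y) : HasSmallBlockMeans fun n => φ (g n) := by
  intro ε hε
  obtain ⟨N, hN, m, hm⟩ := hg (ε / (‖φ‖ + 1)) (by positivity)
  refine ⟨N, hN, m, fun s hs hsm => ?_⟩
  calc ‖∑ i ∈ s, φ (g i)‖ = ‖φ (∑ i ∈ s, g i)‖ := by rw [map_sum]
    _ ≤ ‖φ‖ * ‖∑ i ∈ s, g i‖ := φ.le_opNorm _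
    _ ≤ (‖φ‖ + 1) * (ε / (‖φ‖ + 1) * N) := by
        gcongr
        · exact le_add_of_nonneg_right zero_le_one
        · exact hm s hs hsm
    _ = ε * N := by field_simp

lemma eventually_lt {c : ℕ → ℝ} (hc : HasSmallBlockMeans c) {ε : ℝ} (hε : 0 < ε) :
    ∀ᶠ n in atTop, c n < ε := by
  by_contra hlarge
  rw [not_eventually, Nat.frequently_atTop_iff_infinite] at hlarge
  obtain ⟨N, hN, m, hm⟩ := hc (ε / 2) (half_pos hε)
  obtain ⟨s, hs, hcard⟩ := (hlarge.sdiff (Set.finite_lt_nat m)).exists_subset_card_eq N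
  have hlower : N * ε ≤ ∑ i ∈ s, c i := by
    rw [← hcard, ← nsmul_eq_mul]
    exact s.card_nsmul_le_sum _ _ fun i hi => not_lt.1 (hs hi).1
  have hupper : ∑ i ∈ s, c i ≤ ε / 2 * N :=
    (Real.le_norm_self _).trans (hm s hcard fun i hi => not_lt.1 (hs hi).2)
  have hpos : 0 < N * ε := by positivity
  linarith

lemma tendsto_zero {g : ℕ → X} (hg : HasSmallBlockMeans g) (φ : X →L[ℝ] ℝ) :
    Tendsto (fun n => φ (g n)) atTop (𝓝 0) := by
  rw [Metric.tendsto_nhds]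
  intro ε hε
  filter_upwards [(hg.map φ).eventually_lt hε, (hg.map (-φ)).eventually_lt hε] with n hpos hneg
  rw [Real.dist_eq, sub_zero, abs_lt]
  exact ⟨neg_lt.1 hneg, hpos⟩

lemma isRelWeaklyCompact_range {g : ℕ → X} (hg : HasSmallBlockMeans g) :
    IsRelWeaklyCompact (Set.range g) :=
  isRelWeaklyCompact_range_of_tendsto (x := 0) fun φ => by simpa using hg.tendsto_zero φ

end HasSmallBlockMeans

/-! ### The coordinate functionals -/

/-- `e` is the basis of Talagrand's space, with coordinate functionals `estar`. -/
structure IsTalagrandSystem (e : DyadicTree → X) (estar : DyadicTree → X →L[ℝ] ℝ) : Prop where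
  norm_sum : ∀ a : DyadicTree →₀ ℝ, ‖a.sum fun σ c => c • e σ‖ = treeNorm a
  topologicalClosure_span : (Submodule.span ℝ (Set.range e)).topologicalClosure = ⊤
  coord_self : ∀ σ, estar σ (e σ) = 1
  coord_of_ne : ∀ σ τ, σ ≠ τ → estar σ (e τ) = 0

namespace IsTalagrandSystem

variable {e : DyadicTree → X} {estar : DyadicTree → X →L[ℝ] ℝ}

lemma dense_span (he : IsTalagrandSystem e estar) :
    Dense (Submodule.span ℝ (Set.range e) : Set X) :=
  Submodule.dense_iff_topologicalClosure_eq_top.2 he.topologicalClosure_span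

lemma coord_finsuppSum (he : IsTalagrandSystem e estar) (a : DyadicTree →₀ ℝ) (τ : DyadicTree) :
    estar τ (a.sum fun σ c => c • e σ) = a τ := by
  rw [Finsupp.sum, map_sum, Finset.sum_eq_single τ]
  · rw [map_smul, he.coord_self, smul_eq_mul, mul_one]
  · intro σ _ hσ
    rw [map_smul, he.coord_of_ne τ σ hσ.symm, smul_zero]
  · intro hτ
    rw [Finsupp.notMem_support_iff.1 hτ, zero_smul, map_zero]

lemma coord_sum_basis (he : IsTalagrandSystem e estar) {S : Finset DyadicTree} {τ : DyadicTree}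
    (hτ : τ ∈ S) : estar τ (∑ σ ∈ S, e σ) = 1 := by
  rw [map_sum, Finset.sum_eq_single_of_mem τ hτ fun σ _ hσ => he.coord_of_ne τ σ hσ.symm,
    he.coord_self]

lemma opNorm_le (he : IsTalagrandSystem e estar) (f : X →L[ℝ] ℝ) {C : ℝ} (hC : 0 ≤ C)
    (h : ∀ a : DyadicTree →₀ ℝ, |f (a.sum fun σ c => c • e σ)| ≤ C * treeNorm a) : ‖f‖ ≤ C := by
  have hspan : ∀ x ∈ Submodule.span ℝ (Set.range e), ‖f x‖ ≤ C * ‖x‖ := fun x hx => by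
    obtain ⟨a, rfl⟩ := Finsupp.mem_span_range_iff_exists_finsupp.1 hx
    rw [he.norm_sum]
    exact h a
  exact f.opNorm_le_bound hC fun x => he.dense_span.induction hspan
    (isClosed_le (by fun_prop) (by fun_prop)) x

lemma norm_sum_basis_le (he : IsTalagrandSystem e estar) {S : Finset DyadicTree} {k : ℕ}
    (hk : ∀ n, (DyadicTree.restrictions S n).card ≤ k) : ‖∑ σ ∈ S, e σ‖ ≤ Real.sqrt k := by
  let a : DyadicTree →₀ ℝ := Finsupp.indicator S fun _ _ => 1
  have hsum : a.sum (fun σ c => c • e σ) = ∑ σ ∈ S, e σ := by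
    simpa only [one_smul] using Finsupp.sum_indicator_index (h := fun σ (c : ℝ) => c • e σ)
      (fun _ => 1) fun _ _ => zero_smul ..
  have ha : ∀ τ, |a τ| ≤ 1 := fun τ => by
    classical
    simp only [a, Finsupp.indicator_apply]
    split_ifs <;> simp
  have hsupp : a.support ⊆ S := Finsupp.support_indicator_subset S fun _ _ => 1
  calc ‖∑ σ ∈ S, e σ‖ = treeNorm a := by rw [← hsum, he.norm_sum]
    _ ≤ Real.sqrt k * 1 := treeNorm_le ha fun n =>
        (Finset.card_le_card (DyadicTree.restrictions_mono hsupp n)).trans (hk n)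
    _ = Real.sqrt k := mul_one _

lemma norm_sum_coord_le (he : IsTalagrandSystem e estar) {ι : Type*} [Fintype ι]
    {f : ι → DyadicTree} {n : ℕ} (hlen : ∀ i, n + 1 ≤ (f i).1.length)
    (hinj : Function.Injective fun i => (f i).1.take (n + 1)) :
    ‖∑ i, estar (f i)‖ ≤ Real.sqrt (Fintype.card ι) := by
  refine he.opNorm_le _ (Real.sqrt_nonneg _) fun a => ?_
  have happly : (∑ i, estar (f i)) (a.sum fun σ c => c • e σ) = ∑ i, a (f i) := by
    simp only [_root_.sum_apply, he.coord_finsuppSum]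
  rw [happly]
  refine abs_le_of_sq_le_sq ?_ (mul_nonneg (Real.sqrt_nonneg _) (treeNorm_nonneg a))
  calc (∑ i, a (f i)) ^ 2 ≤ Fintype.card ι * ∑ i, a (f i) ^ 2 := sq_sum_le_card_mul_sum_sq
    _ ≤ Fintype.card ι * treeNorm a ^ 2 := by gcongr; exact sum_sq_le_treeNorm_sq a hlen hinj
    _ = (Real.sqrt (Fintype.card ι) * treeNorm a) ^ 2 := by
        rw [mul_pow, Real.sq_sqrt (Nat.cast_nonneg _)]

lemma norm_coord_le_one (he : IsTalagrandSystem e estar) (σ : DyadicTree) : ‖estar σ‖ ≤ 1 := by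
  simpa using he.norm_sum_coord_le (ι := Unit) (f := fun _ => σ) (n := 0)
    (fun _ => List.length_pos_iff.2 σ.2) (Function.injective_of_subsingleton _)

/-- Along a comb `u` the vectors `∑ k < N, e (u k)` stay bounded, so every `estar (u k)` has
limit `1` on them and the `estar (u k)` cannot accumulate weakly at `0`. As they are weak* null,
they accumulate nowhere. -/
lemma finite_setOf_coord_mem (he : IsTalagrandSystem e estar) {W : Set (X →L[ℝ] ℝ)}
    (hW : IsWeaklyCompact W) : {σ | estar σ ∈ W}.Finite := by
  by_contra hinf
  obtain ⟨u, huW, hu⟩ := DyadicTree.exists_embedding_card_restrictions_le_two hinf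
  have hnull : ∀ x ∈ Set.range e, Tendsto (fun k => estar (u k) x) atTop (𝓝 0) := by
    rintro _ ⟨σ, rfl⟩
    have hne : ∀ᶠ k in atTop, u k ≠ σ := by
      rw [← Nat.cofinite_eq_atTop]
      exact u.injective.tendsto_cofinite (Set.finite_singleton σ).compl_mem_cofinite
    exact tendsto_const_nhds.congr' (hne.mono fun k hk => (he.coord_of_ne _ _ hk).symm)
  refine zero_notMem_closure_toWeakSpace (fun N => he.norm_sum_basis_le (hu N)) (l := atTop) ?_
    (hW.zero_mem_closure_of_tendsto huW he.dense_span hnull)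
  rintro _ ⟨k, rfl⟩
  refine tendsto_const_nhds.congr' ((eventually_gt_atTop k).mono fun N hN => ?_)
  exact (he.coord_sum_basis (Finset.mem_map_of_mem u (Finset.mem_range.2 hN))).symm

lemma exists_forall_length_coord_notMem (he : IsTalagrandSystem e estar) {W : Set (X →L[ℝ] ℝ)}
    (hW : IsWeaklyCompact W) : ∃ n, ∀ σ, σ.1.length = n + 1 → estar σ ∉ W := by
  obtain ⟨n, hn⟩ := ((he.finite_setOf_coord_mem hW).image (·.1.length)).bddAbove
  refine ⟨n, fun σ hσ hσW => ?_⟩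
  have hle : σ.1.length ≤ n := hn ⟨σ, hσW, rfl⟩
  omega

end IsTalagrandSystem

/-! ### Random nodes -/

section Random

variable {μ : Measure Ω}

lemma norm_Lp_one_le [IsFiniteMeasure μ] {F : Type*} [NormedAddCommGroup F] (G : Lp F 1 μ)
    {a b : ℝ} {C : Set Ω} (ha : 0 ≤ a) (hG : ∀ᵐ x ∂μ, ‖G x‖ ≤ b)
    (hGC : ∀ᵐ x ∂μ, x ∉ C → ‖G x‖ ≤ a) : ‖G‖ ≤ a * μ.real univ + b * μ.real C := by
  let C' := toMeasurable μ C
  have hC' : MeasurableSet C' := measurableSet_toMeasurable μ C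
  have hbound : ∀ᵐ x ∂μ, ‖G x‖ ≤ a + C'.indicator (fun _ => b) x := by
    filter_upwards [hG, hGC] with x hx hxC
    by_cases h : x ∈ C'
    · rw [Set.indicator_of_mem h]
      exact le_add_of_nonneg_of_le ha hx
    · rw [Set.indicator_of_notMem h, add_zero]
      exact hxC fun hC => h (subset_toMeasurable μ C hC)
  have hint : Integrable (C'.indicator fun _ => b) μ := (integrable_const b).indicator hC'
  calc ‖G‖ = ∫ x, ‖G x‖ ∂μ := L1.norm_eq_integral_norm G
    _ ≤ ∫ x, a + C'.indicator (fun _ => b) x ∂μ :=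
        integral_mono_ae (L1.integrable_coeFn G).norm ((integrable_const a).add hint) hbound
    _ = a * μ.real univ + b * μ.real C := by
        rw [integral_add (integrable_const a) hint, integral_const, integral_indicator_const b hC',
          measureReal_def μ C', measure_toMeasurable, ← measureReal_def, smul_eq_mul, smul_eq_mul,
          mul_comm a, mul_comm b]

lemma measureReal_not_injOn_le [IsFiniteMeasure μ] {ι α : Type*} {s : Finset ι} {U : ι → Ω → α}
    {c : ℝ} (hU : ∀ i ∈ s, ∀ j ∈ s, i ≠ j → μ.real {ω | U i ω = U j ω} ≤ c) (hc : 0 ≤ c) :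
    μ.real {ω | ¬ Set.InjOn (U · ω) s} ≤ s.card ^ 2 * c := by
  classical
  calc μ.real {ω | ¬ Set.InjOn (U · ω) s}
      ≤ μ.real (⋃ p ∈ s.offDiag, {ω | U p.1 ω = U p.2 ω}) := by
        refine measureReal_mono (fun ω hω => ?_) (measure_ne_top μ _)
        simp only [Set.InjOn, not_forall, Set.mem_ofPred_eq] at hω
        obtain ⟨i, hi, j, hj, hij, hne⟩ := hω
        exact Set.mem_biUnion (x := (i, j)) (Finset.mem_offDiag.2 ⟨hi, hj, hne⟩) hij
    _ ≤ ∑ p ∈ s.offDiag, μ.real {ω | U p.1 ω = U p.2 ω} := measureReal_biUnion_finset_le _ _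
    _ ≤ ∑ _p ∈ s.offDiag, c := Finset.sum_le_sum fun p hp =>
        have ⟨hi, hj, hne⟩ := Finset.mem_offDiag.1 hp
        hU p.1 hi p.2 hj hne
    _ ≤ s.card ^ 2 * c := by
        rw [Finset.sum_const, nsmul_eq_mul, Finset.offDiag_card, sq, ← Nat.cast_mul]
        gcongr
        exact Nat.sub_le _ _

lemma measureReal_eq_le_of_indepFun [IsProbabilityMeasure μ] {α : Type*} [Finite α]
    [MeasurableSpace α] [MeasurableSingletonClass α] {U V : Ω → α} (hU : Measurable U)
    (hUV : IndepFun U V μ) {c : ℝ} (hc : ∀ u, μ.real (V ⁻¹' {u}) ≤ c) :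
    μ.real {ω | U ω = V ω} ≤ c := by
  have := Fintype.ofFinite α
  have hcover : {ω | U ω = V ω} ⊆ ⋃ u ∈ Finset.univ, U ⁻¹' {u} ∩ V ⁻¹' {u} := fun ω hω =>
    Set.mem_biUnion (Finset.mem_univ (U ω)) ⟨rfl, Eq.symm hω⟩
  calc μ.real {ω | U ω = V ω} ≤ ∑ u, μ.real (U ⁻¹' {u} ∩ V ⁻¹' {u}) :=
        (measureReal_mono hcover (measure_ne_top μ _)).trans
          (measureReal_biUnion_finset_le _ _)
    _ = ∑ u, μ.real (U ⁻¹' {u}) * μ.real (V ⁻¹' {u}) := Finset.sum_congr rfl fun u _ => by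
        rw [measureReal_def, hUV.measure_inter_preimage_eq_mul _ _ (.singleton u) (.singleton u),
          ENNReal.toReal_mul, ← measureReal_def, ← measureReal_def]
    _ ≤ ∑ u, μ.real (U ⁻¹' {u}) * c := by gcongr; exact hc _
    _ = c := by
        rw [← Finset.sum_mul, sum_measureReal_preimage_singleton _ fun u _ => hU (.singleton u),
          Finset.coe_univ, Set.preimage_univ, probReal_univ, one_mul]

lemma card_comp_castAdd_eq_le {α : Type*} [Fintype α] [DecidableEq α] {k d : ℕ} (u : Fin k → α) :
    {v : Fin (k + d) → α | v ∘ Fin.castAdd d = u}.toFinset.card ≤ Fintype.card α ^ d := by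
  calc _ ≤ (Finset.univ : Finset (Fin d → α)).card := by
        refine Finset.card_le_card_of_injOn (· ∘ Fin.natAdd k) (fun _ _ => Finset.mem_univ _) ?_
        intro v hv w hw hvw
        rw [Set.coe_toFinset] at hv hw
        rw [← Fin.append_castAdd_natAdd (f := v), ← Fin.append_castAdd_natAdd (f := w)]
        exact congrArg₂ Fin.append (hv.trans hw.symm) hvw
    _ = Fintype.card α ^ d := by rw [Finset.card_univ, Fintype.card_fun, Fintype.card_fin]

lemma measureReal_comp_castAdd_preimage_le [IsFiniteMeasure μ] {k d : ℕ}
    {V : Ω → Fin (k + d) → Bool} (hV : Measurable V)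
    (huniform : ∀ v, μ.real (V ⁻¹' {v}) = (1 / 2) ^ (k + d)) (u : Fin k → Bool) :
    μ.real ((fun ω => V ω ∘ Fin.castAdd d) ⁻¹' {u}) ≤ (1 / 2) ^ k := by
  let S := {v : Fin (k + d) → Bool | v ∘ Fin.castAdd d = u}.toFinset
  have hS : (fun ω => V ω ∘ Fin.castAdd d) ⁻¹' {u} = V ⁻¹' S := by rw [Set.coe_toFinset]; rfl
  calc μ.real ((fun ω => V ω ∘ Fin.castAdd d) ⁻¹' {u}) = ∑ v ∈ S, μ.real (V ⁻¹' {v}) := by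
        rw [hS, sum_measureReal_preimage_singleton _ fun v _ => hV (.singleton v)]
    _ = S.card * (1 / 2) ^ (k + d) := by simp only [huniform, Finset.sum_const, nsmul_eq_mul]
    _ ≤ (Fintype.card Bool ^ d : ℕ) * (1 / 2) ^ (k + d) := by
        gcongr
        exact card_comp_castAdd_eq_le u
    _ = (1 / 2) ^ k := by
        rw [Fintype.card_bool, Nat.cast_pow, pow_add, mul_left_comm, ← mul_pow]
        norm_num

lemma take_ofFn_add {α : Type*} {k d : ℕ} (v : Fin (k + d) → α) :
    (List.ofFn v).take k = List.ofFn (v ∘ Fin.castAdd d) := by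
  rw [List.ofFn_add, List.take_left' List.length_ofFn]
  rfl

lemma measureReal_take_ofFn_eq_le [IsProbabilityMeasure μ] {k m n : ℕ} (hm : k ≤ m) (hn : k ≤ n)
    {U : Ω → Fin m → Bool} {V : Ω → Fin n → Bool} (hU : Measurable U) (hV : Measurable V)
    (hUV : IndepFun U V μ) (huniform : ∀ v, μ.real (V ⁻¹' {v}) = (1 / 2) ^ n) :
    μ.real {ω | (List.ofFn (U ω)).take k = (List.ofFn (V ω)).take k} ≤ (1 / 2) ^ k := by
  obtain ⟨c, rfl⟩ := Nat.exists_eq_add_of_le hm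
  obtain ⟨d, rfl⟩ := Nat.exists_eq_add_of_le hn
  simp only [take_ofFn_add, List.ofFn_injective.eq_iff]
  have hinit : ∀ d, Measurable fun v : Fin (k + d) → Bool => v ∘ Fin.castAdd d :=
    fun d => .of_discrete
  exact measureReal_eq_le_of_indepFun ((hinit c).comp hU) (hUV.comp (hinit c) (hinit d))
    (measureReal_comp_castAdd_preimage_le hV huniform)

end Random

section Coordinates

variable {ι : Type*} {α : ι → Type*} [∀ i, MeasurableSpace (α i)] {μ : Measure (∀ i, α i)}
  {p : ∀ i, α i → ℝ≥0∞}

lemma measure_eval_eq_of_cylinder [∀ i, Nonempty (α i)]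
    (hμ : ∀ (s : Finset ι) (b : ∀ i, α i), μ {x | ∀ i ∈ s, x i = b i} = ∏ i ∈ s, p i (b i))
    (i : ι) (a : α i) : μ ((fun x => x i) ⁻¹' {a}) = p i a := by
  obtain ⟨b, rfl⟩ := Function.surjective_eval i a
  simpa [Set.preimage] using hμ {i} b

lemma indepFun_eval_of_cylinder [∀ i, Nonempty (α i)] [∀ i, Countable (α i)]
    [∀ i, MeasurableSingletonClass (α i)] [IsFiniteMeasure μ]
    (hμ : ∀ (s : Finset ι) (b : ∀ i, α i), μ {x | ∀ i ∈ s, x i = b i} = ∏ i ∈ s, p i (b i)) :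
    Pairwise fun i j => IndepFun (fun x => x i) (fun x => x j) μ := by
  classical
  have hmeas : ∀ i, Measurable fun x : ∀ i, α i => x i := measurable_pi_apply
  intro i j hij
  refine (indepFun_iff_map_prod_eq_prod_map_map (hmeas i).aemeasurable (hmeas j).aemeasurable).2
    (Measure.ext_of_singleton fun ⟨a, a'⟩ => ?_)
  obtain ⟨b, rfl, rfl⟩ : ∃ b : ∀ i, α i, b i = a ∧ b j = a' :=
    ⟨Function.update (Function.update (fun _ => Classical.arbitrary _) i a) j a', by simp [hij]⟩
  have hpair : (fun x : ∀ i, α i => (x i, x j)) ⁻¹' {(b i, b j)} =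
      {x | ∀ k ∈ ({i, j} : Finset ι), x k = b k} := by ext; simp
  rw [Measure.map_apply ((hmeas i).prodMk (hmeas j)) (.singleton _), hpair, hμ,
    Finset.prod_pair hij, ← Set.singleton_prod_singleton, Measure.prod_prod,
    Measure.map_apply (hmeas i) (.singleton _), Measure.map_apply (hmeas j) (.singleton _),
    measure_eval_eq_of_cylinder hμ, measure_eval_eq_of_cylinder hμ]

end Coordinates

lemma exists_sqrt_add_mul_le {ε : ℝ} (hε : 0 < ε) :
    ∃ N : ℕ, 0 < N ∧ ∃ m : ℕ, Real.sqrt N + N * (N ^ 2 * (1 / 2) ^ (m + 1)) ≤ ε * N := by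
  obtain ⟨N, hN⟩ := exists_nat_gt ((2 / ε) ^ 2)
  have hN0 : (0 : ℝ) < N := (sq_nonneg _).trans_lt hN
  have hsqrt : Real.sqrt N ≤ ε / 2 * N := by
    have h : 2 / ε ≤ Real.sqrt N := Real.le_sqrt_of_sq_le hN.le
    calc Real.sqrt N = ε / 2 * (2 / ε * Real.sqrt N) := by field_simp
      _ ≤ ε / 2 * (Real.sqrt N * Real.sqrt N) := by gcongr
      _ = ε / 2 * N := by rw [Real.mul_self_sqrt hN0.le]
  obtain ⟨m, hm⟩ := exists_pow_lt_of_lt_one (by positivity : 0 < ε / 2 / N ^ 2)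
    (by norm_num : (1 / 2 : ℝ) < 1)
  have hpow : (N : ℝ) ^ 2 * (1 / 2) ^ (m + 1) ≤ ε / 2 := by
    rw [mul_comm, ← le_div_iff₀ (by positivity)]
    exact (pow_le_pow_of_le_one (by norm_num) (by norm_num) m.le_succ).trans hm.le
  refine ⟨N, Nat.cast_pos.1 hN0, m, ?_⟩
  calc Real.sqrt N + N * (N ^ 2 * (1 / 2) ^ (m + 1)) ≤ ε / 2 * N + N * (ε / 2) := by gcongr
    _ = ε * N := by ring

lemma not_isDeltaSSet {μ : Measure Ω} {K : Set (Lp X 1 μ)} {δ : ℝ} (hδ : 0 < δ)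
    (h : ∀ W : Set X, IsWeaklyCompact W → ∃ f ∈ K, μ (f ⁻¹' W) < 1 - ENNReal.ofReal δ) :
    ¬ IsDeltaSSet μ K := fun hK => by
  obtain ⟨W, hW, hKW⟩ := hK.2 δ hδ
  obtain ⟨f, hf, hfW⟩ := h W hW
  exact hfW.not_ge (hKW f hf)

namespace IsTalagrandSystem

variable {e : DyadicTree → X} {estar : DyadicTree → X →L[ℝ] ℝ} {μ : Measure Ω}

/-- Where the `Z i` have distinct restrictions to level `n`, `norm_sum_coord_le` bounds the sum by
`√#s`; elsewhere the triangle inequality bounds it by `#s`. -/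
lemma norm_sum_Lp_le [IsProbabilityMeasure μ] (he : IsTalagrandSystem e estar) {ι : Type*}
    (s : Finset ι) {Z : ι → Ω → DyadicTree} {g : ι → Lp (X →L[ℝ] ℝ) 1 μ}
    (hg : ∀ i, g i =ᵐ[μ] fun ω => estar (Z i ω)) {n : ℕ}
    (hlen : ∀ i ∈ s, ∀ ω, n + 1 ≤ (Z i ω).1.length) :
    ‖∑ i ∈ s, g i‖ ≤ Real.sqrt s.card +
      s.card * μ.real {ω | ¬ Set.InjOn (fun i => (Z i ω).1.take (n + 1)) s} := by
  have hsum : ∀ᵐ ω ∂μ, (∑ i ∈ s, g i : Lp (X →L[ℝ] ℝ) 1 μ) ω = ∑ i ∈ s, estar (Z i ω) := by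
    filter_upwards [Lp.coeFn_finsetSum s g, (s.eventually_all).2 fun i _ => hg i] with ω hω hgω
    rw [hω, Finset.sum_apply]
    exact Finset.sum_congr rfl hgω
  have hdistinct : ∀ ω, Set.InjOn (fun i => (Z i ω).1.take (n + 1)) s →
      ‖∑ i ∈ s, estar (Z i ω)‖ ≤ Real.sqrt s.card := fun ω hω => by
    have h := he.norm_sum_coord_le (f := fun i : s => Z i ω) (fun i => hlen i i.2 ω)
      hω.injective
    rwa [Finset.sum_coe_sort s fun i => estar (Z i ω), Fintype.card_coe] at h
  have htriangle : ∀ ω, ‖∑ i ∈ s, estar (Z i ω)‖ ≤ s.card := fun ω => by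
    simpa using norm_sum_le_of_le s fun i _ => he.norm_coord_le_one (Z i ω)
  let C := {ω | ¬ Set.InjOn (fun i => (Z i ω).1.take (n + 1)) s}
  have hnorm := norm_Lp_one_le (∑ i ∈ s, g i) (C := C) (Real.sqrt_nonneg s.card)
    (hsum.mono fun ω hω => hω ▸ htriangle ω)
    (hsum.mono fun ω hω hC => hω ▸ hdistinct ω (not_not.1 hC))
  rwa [probReal_univ, mul_one] at hnorm

variable {P : ∀ n : ℕ, Ω → Fin (n + 1) → Bool}

lemma hasSmallBlockMeans [IsProbabilityMeasure μ] (he : IsTalagrandSystem e estar)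
    (hmeas : ∀ n, Measurable (P n))
    (huniform : ∀ n v, μ.real (P n ⁻¹' {v}) = (1 / 2) ^ (n + 1))
    (hindep : Pairwise fun i j => IndepFun (P i) (P j) μ) {g : ℕ → Lp (X →L[ℝ] ℝ) 1 μ}
    (hg : ∀ n, g n =ᵐ[μ] fun ω => estar (node (P n ω))) : HasSmallBlockMeans g := by
  intro ε hε
  obtain ⟨N, hN, m, hbound⟩ := exists_sqrt_add_mul_le hε
  refine ⟨N, hN, m, fun s hs hm => ?_⟩
  have hcollision := measureReal_not_injOn_le (μ := μ) (s := s)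
    (U := fun i ω => (node (P i ω)).1.take (m + 1)) (fun i hi j hj hij =>
      measureReal_take_ofFn_eq_le (Nat.succ_le_succ (hm i hi)) (Nat.succ_le_succ (hm j hj))
        (hmeas i) (hmeas j) (hindep hij) (huniform j)) (by positivity)
  have hlen : ∀ i ∈ s, ∀ ω, m + 1 ≤ (node (P i ω)).1.length := fun i hi ω => by
    simpa [node] using hm i hi
  calc ‖∑ i ∈ s, g i‖ ≤ _ := he.norm_sum_Lp_le s hg hlen
    _ ≤ Real.sqrt s.card + s.card * (s.card ^ 2 * (1 / 2) ^ (m + 1)) := by gcongr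
    _ ≤ ε * N := by rwa [hs]

lemma exists_preimage_coord_node_eq_empty (he : IsTalagrandSystem e estar) {β : Type*}
    (P : ∀ n : ℕ, β → Fin (n + 1) → Bool) {W : Set (X →L[ℝ] ℝ)} (hW : IsWeaklyCompact W) :
    ∃ n, (fun ω => estar (node (P n ω))) ⁻¹' W = ∅ := by
  obtain ⟨n, hn⟩ := he.exists_forall_length_coord_notMem hW
  exact ⟨n, Set.eq_empty_of_forall_notMem fun ω => hn _ (by simp [node])⟩

lemma memLp_coord_node [IsFiniteMeasure μ] (he : IsTalagrandSystem e estar) {n : ℕ}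
    {U : Ω → Fin (n + 1) → Bool} (hU : Measurable U) : MemLp (fun ω => estar (node (U ω))) 1 μ :=
  .of_bound ((StronglyMeasurable.of_discrete
    (f := fun v : Fin (n + 1) → Bool => estar (node v))).comp_measurable hU).aestronglyMeasurable 1
    (.of_forall fun _ => he.norm_coord_le_one _)

lemma not_isDeltaSSet_range (he : IsTalagrandSystem e estar) {g : ℕ → Lp (X →L[ℝ] ℝ) 1 μ}
    (hg : ∀ n, g n =ᵐ[μ] fun ω => estar (node (P n ω))) : ¬ IsDeltaSSet μ (Set.range g) := by
  refine not_isDeltaSSet one_half_pos fun W hW => ?_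
  obtain ⟨n, hn⟩ := he.exists_preimage_coord_node_eq_empty P hW
  refine ⟨g n, ⟨n, rfl⟩, ?_⟩
  rw [measure_congr ((hg n).preimage W), hn, measure_empty]
  simp

end IsTalagrandSystem

theorem talagrand_dual_fails_deltaS_general {e : DyadicTree → X} {estar : DyadicTree → X →L[ℝ] ℝ}
    (he : IsTalagrandSystem e estar) {μ : Measure Ω} [IsProbabilityMeasure μ]
    {P : ∀ n : ℕ, Ω → Fin (n + 1) → Bool} (hmeas : ∀ n, Measurable (P n))
    (huniform : ∀ n v, μ.real (P n ⁻¹' {v}) = (1 / 2) ^ (n + 1))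
    (hindep : Pairwise fun i j => IndepFun (P i) (P j) μ) :
    (∀ δ : ℝ, 0 < δ → ∀ W : Set (X →L[ℝ] ℝ), IsWeaklyCompact W →
      ∃ n : ℕ, μ ((fun ω => estar (node (P n ω))) ⁻¹' W) < ENNReal.ofReal δ) ∧
    (∀ g : ℕ → Lp (X →L[ℝ] ℝ) 1 μ, (∀ n, g n =ᵐ[μ] fun ω => estar (node (P n ω))) →
      IsRelWeaklyCompact (Set.range g) ∧ ¬ IsDeltaSSet μ (Set.range g)) ∧
    ¬ DeltaSProp μ (X →L[ℝ] ℝ) := by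
  have hrange : ∀ g : ℕ → Lp (X →L[ℝ] ℝ) 1 μ, (∀ n, g n =ᵐ[μ] fun ω => estar (node (P n ω))) →
      IsRelWeaklyCompact (Set.range g) ∧ ¬ IsDeltaSSet μ (Set.range g) := fun g hg =>
    ⟨(he.hasSmallBlockMeans hmeas huniform hindep hg).isRelWeaklyCompact_range,
      he.not_isDeltaSSet_range hg⟩
  refine ⟨fun δ hδ W hW => ?_, hrange, fun hprop => ?_⟩
  · obtain ⟨n, hn⟩ := he.exists_preimage_coord_node_eq_empty P hW
    exact ⟨n, by rwa [hn, measure_empty, ENNReal.ofReal_pos]⟩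
  · obtain ⟨hcompact, hfail⟩ := hrange (fun n => (he.memLp_coord_node (hmeas n)).toLp)
      fun n => (he.memLp_coord_node (hmeas n)).coeFn_toLp
    exact hfail (hprop _ hcompact)

/-- Talagrand's example: `E` is the Talagrand space on the dyadic tree, `E*` its (separable,
Schur) dual, `Ω = Πₙ {0,1}ⁿ⁺¹` with the product probability `μ`, `fₙ(ω) = e*_{Pₙ(ω)}`.
Then for every `δ > 0` and weakly compact `W ⊆ E*` there is `n` with `μ (fₙ ⁻¹' W) < δ`;
consequently `{fₙ}` is relatively weakly compact in `L¹(μ,E*)` but not a δS-set, and `E*`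
fails property (δSμ). -/
theorem talagrand_dual_fails_deltaS
    {E : Type*} [NormedAddCommGroup E] [NormedSpace ℝ E] [CompleteSpace E]
    (e : DyadicTree → E)
    -- the norm in `E` of a finitely supported combination is given by Talagrand's formula
    (hnorm : ∀ a : DyadicTree →₀ ℝ, ‖∑ σ ∈ a.support, a σ • e σ‖ =
      ⨆ n : ℕ, Real.sqrt (∑' σ : {σ : DyadicTree // σ.1.length = n + 1},
        (sSup {r : ℝ | ∃ τ : DyadicTree, σ.1.Ext τ ∧ r = |a τ|}) ^ 2))
    (hdense : (Submodule.span ℝ (Set.range e)).topologicalClosure = ⊤)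
    -- biorthogonal functionals
    (estar : DyadicTree → E →L[ℝ] ℝ)
    (hbi1 : ∀ σ : DyadicTree, estar σ (e σ) = 1)
    (hbi0 : ∀ σ τ : DyadicTree, σ ≠ τ → estar σ (e τ) = 0)
    -- `μ` is the product probability on `Ω = Πₙ {0,1}ⁿ⁺¹` giving each point of `{0,1}ⁿ⁺¹`
    -- mass `2^{-(n+1)}`
    (μ : Measure (∀ n : ℕ, Fin (n + 1) → Bool)) [IsProbabilityMeasure μ]
    (hμ : ∀ (s : Finset ℕ) (b : ∀ n : ℕ, Fin (n + 1) → Bool),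
      μ {ω | ∀ n ∈ s, ω n = b n} = ∏ n ∈ s, ((2 : ℝ≥0∞) ^ (n + 1))⁻¹) :
    (∀ δ : ℝ, 0 < δ → ∀ W : Set (E →L[ℝ] ℝ), IsWeaklyCompact W →
      ∃ n : ℕ, μ ((fun ω => estar (node (ω n))) ⁻¹' W) < ENNReal.ofReal δ) ∧
    (∀ g : ℕ → Lp (E →L[ℝ] ℝ) 1 μ,
      (∀ n : ℕ, (g n : (∀ n : ℕ, Fin (n + 1) → Bool) → E →L[ℝ] ℝ)
        =ᵐ[μ] fun ω => estar (node (ω n))) →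
      IsRelWeaklyCompact (Set.range g) ∧ ¬ IsDeltaSSet μ (Set.range g)) ∧
    ¬ DeltaSProp μ (E →L[ℝ] ℝ) := by
  let p : ∀ n : ℕ, (Fin (n + 1) → Bool) → ℝ≥0∞ := fun n _ => (2 ^ (n + 1))⁻¹
  have huniform : ∀ n v, μ.real ((fun ω => ω n) ⁻¹' {v}) = (1 / 2) ^ (n + 1) := fun n v => by
    rw [measureReal_def, measure_eval_eq_of_cylinder (p := p) hμ]
    simp [p]
  exact talagrand_dual_fails_deltaS_general ⟨hnorm, hdense, hbi1, hbi0⟩ measurable_pi_apply huniform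
    (indepFun_eval_of_cylinder (p := p) hμ)
end
end
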